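/- arXiv:1901.04034 — 3 statements merged into one kernel-verified Lean document; each statement's English description precedes it below -/
import Mathlib

section
/- Let T be a 2-spider of order d such that every leg of T has order at most d/2 and such that it is not the case that T has exactly three legs with two of them of order one. Then for every integer n with 4 ≤ n < d/2: c_n(T) = ρ_{n,1}(T) + ρ_{n,2}(T), and c_{n−1,1}(T) = (c_1−1)·ρ_{n−1,1}(T) + (c_1−2)·ρ_{n−1,2}(T) + 2·ρ_{n,1}(T) + 3·ρ_{n,2}(T), where c_1 = c_1(T). -/
open SimpleGraph

/-- The multiset of orders of the connected components of a graph on a finite vertex set. -/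
noncomputable def compSizes {V : Type} [Fintype V] (H : SimpleGraph V) : Multiset ℕ :=
  haveI : DecidableEq H.ConnectedComponent := Classical.decEq _
  (Finset.univ.image H.connectedComponentMk).val.map fun c => c.supp.ncard

/-- `cCoeff G lam` is the number of subsets `F` of the edge set of `G` such that the
multiset of orders of the connected components of the spanning subgraph `(V, F)`
is exactly `lam`.  For a tree `T` this is the coefficient `c_lam(T)`. -/
noncomputable def cCoeff {V : Type} [Fintype V] (G : SimpleGraph V) (lam : Multiset ℕ) : ℕ :=
  Set.ncard {F : Set (Sym2 V) | F ⊆ G.edgeSet ∧ compSizes (SimpleGraph.fromEdgeSet F) = lam}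

/-- `IsRootedSubtree T e v R r` says: `e` is an edge of `T`, `v` is an endpoint of `e`,
and the connected component of `v` after deleting `e`, rooted at `v`, is isomorphic to
the rooted tree `(R, r)` via a graph isomorphism sending root to root. -/
def IsRootedSubtree {V W : Type} (T : SimpleGraph V) (e : Sym2 V) (v : V)
    (R : SimpleGraph W) (r : W) : Prop :=
  e ∈ T.edgeSet ∧ v ∈ e ∧
  ∃ φ : R ≃g (T.deleteEdges {e}).induce ((T.deleteEdges {e}).connectedComponentMk v).supp,
    (φ r : V) = v

/-- `rho T R r` is the number of rooted subtrees of `T` isomorphic to the rooted tree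
`(R, r)`, counted over all pairs (edge `e`, endpoint `v` of `e`). -/
noncomputable def rho {V W : Type} [Fintype V] (T : SimpleGraph V)
    (R : SimpleGraph W) (r : W) : ℕ :=
  Set.ncard {p : Sym2 V × V | IsRootedSubtree T p.1 p.2 R r}

/-- The number of leaves (vertices of degree one) of a graph. -/
noncomputable def leafCount {V : Type} [Fintype V] (G : SimpleGraph V) : ℕ :=
  Set.ncard {v : V | (G.neighborSet v).ncard = 1}

/-- The rooted tree `R_{n,2}` (for `n ≥ 3`): the path `0 - 1 - ⋯ - (n-2)` rooted at the
leaf `0`, together with an extra leaf `n-1` attached to the second outward-most vertex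
`n-3` from the root.  (`R_{n,1}` is `SimpleGraph.pathGraph n` rooted at the leaf `0`.) -/
def Rtwo (n : ℕ) : SimpleGraph (Fin n) :=
  SimpleGraph.fromRel fun i j =>
    (j.val = i.val + 1 ∧ j.val ≤ n - 2) ∨ (i.val = n - 3 ∧ j.val = n - 1)

/-- The order of the "leg" of `T` at `u` hanging off the vertex `t`: the number of vertices
of the connected component of `u` after deleting the edge `{t, u}`. -/
noncomputable def legOrder {V : Type} (T : SimpleGraph V) (t u : V) : ℕ :=
  ((T.deleteEdges {s(t, u)}).connectedComponentMk u).supp.ncard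

/-- The leg of `T` at `u` (hanging off `t`) is a 1-leg: the component of `u` in `T − t`,
rooted at `u`, is isomorphic to some `R_{n,1}`, i.e. a path rooted at a leaf. -/
def IsOneLegAt {V : Type} (T : SimpleGraph V) (t u : V) : Prop :=
  ∃ n : ℕ, ∃ h : 0 < n, IsRootedSubtree T s(t, u) u (SimpleGraph.pathGraph n) ⟨0, h⟩

/-- The leg of `T` at `u` (hanging off `t`) is a 2-leg: the component of `u` in `T − t`,
rooted at `u`, is isomorphic to some `R_{n,2}` with `n ≥ 3`. -/
def IsTwoLegAt {V : Type} (T : SimpleGraph V) (t u : V) : Prop :=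
  ∃ n : ℕ, ∃ h : 3 ≤ n, IsRootedSubtree T s(t, u) u (Rtwo n) ⟨0, by omega⟩

/-- `T` is a 2-spider with torso `t`: `T` is a tree, `t` has degree at least 3, and every
connected component of `T − t`, rooted at its vertex adjacent to `t`, is isomorphic as a
rooted tree to some `R_{n,1}` (a 1-leg) or to some `R_{n,2}` with `n ≥ 3` (a 2-leg). -/
def IsTwoSpiderWithTorso {V : Type} (T : SimpleGraph V) (t : V) : Prop :=
  T.IsTree ∧ 3 ≤ (T.neighborSet t).ncard ∧
    ∀ u : V, T.Adj t u → IsOneLegAt T t u ∨ IsTwoLegAt T t u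

/-- `T` is a 2-spider. -/
def IsTwoSpider {V : Type} (T : SimpleGraph V) : Prop :=
  ∃ t : V, IsTwoSpiderWithTorso T t

/-- `T`, as a 2-spider with torso `t`, has exactly three legs, two of which have order one. -/
def ThreeLegsTwoSingletons {V : Type} (T : SimpleGraph V) (t : V) : Prop :=
  (T.neighborSet t).ncard = 3 ∧
  ∃ u₁ u₂ : V, u₁ ≠ u₂ ∧ T.Adj t u₁ ∧ T.Adj t u₂ ∧
    legOrder T t u₁ = 1 ∧ legOrder T t u₂ = 1

/-!
Cutting an edge of a tree splits off two complementary branches, and any two branches are disjoint,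
nested, or cover the tree. Hence an edge set contributing to `c_n` is a branch of order `n`, and one
contributing to `c_{n-1,1}` is a pair of branches of orders `n - 1` and `1` that are disjoint, or a
branch of order `n` split by an inner branch of order `n - 1` or `1`.

Since the legs have order at most `d/2`, a branch of order less than `d/2` avoids the torso and so
lies in a leg. A branch of a path is a path, and a branch of order greater than `1` of a fork
`R_{k,2}` is a fork. A path contains exactly one branch of order `1` and a fork exactly two; a path
or fork of order `n ≥ 4` contains exactly one branch of order `n - 1`. So a branch of order `n - 1`
is disjoint from `c_1 - 1` or `c_1 - 2` leaves, and a branch of order `n` is split in `1 + 1` or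
`1 + 2` ways.
-/

namespace TwoSpider

section Components

variable {V : Type*} {G : SimpleGraph V} {S : Set V}

lemma mem_of_reachable (hS : ∀ ⦃x y⦄, G.Adj x y → x ∈ S → y ∈ S) {x y : V}
    (hxy : G.Reachable x y) (hx : x ∈ S) : y ∈ S := by
  obtain ⟨p⟩ := hxy
  by_contra hy
  obtain ⟨d, -, hfst, hsnd⟩ := p.exists_boundary_dart S hx hy
  exact hsnd (hS d.adj hfst)

lemma mem_of_preconnected (hG : G.Preconnected) (hS : ∀ ⦃x y⦄, G.Adj x y → x ∈ S → y ∈ S) {x : V}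
    (hx : x ∈ S) (y : V) : y ∈ S :=
  mem_of_reachable hS (hG x y) hx

lemma reachable_deleteEdges_or {u v x y : V} (hxy : G.Reachable x y) :
    (G.deleteEdges {s(u, v)}).Reachable x y ∨ (G.deleteEdges {s(u, v)}).Reachable x u ∨
      (G.deleteEdges {s(u, v)}).Reachable x v := by
  by_contra! h
  refine h.1 (mem_of_reachable (S := {z | (G.deleteEdges {s(u, v)}).Reachable x z}) ?_ hxy
    (Reachable.refl x))
  intro a b hab (ha : Reachable _ x a)
  have hne : s(a, b) ≠ s(u, v) := by
    rintro he
    rcases Sym2.eq_iff.1 he with ⟨rfl, -⟩ | ⟨rfl, -⟩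
    exacts [h.2.1 ha, h.2.2 ha]
  exact ha.trans (Adj.reachable ((deleteEdges_adj ..).2 ⟨hab, hne⟩))

lemma card_connectedComponent_deleteEdges_singleton [Finite V] {e : Sym2 V} (he : G.IsBridge e)
    (heG : e ∈ G.edgeSet) :
    Nat.card (G.deleteEdges {e}).ConnectedComponent = Nat.card G.ConnectedComponent + 1 := by
  induction e with | h u v
  set H := G.deleteEdges {s(u, v)}
  let π : H.ConnectedComponent → G.ConnectedComponent :=
    ConnectedComponent.map (Hom.ofLE (deleteEdges_le _))
  have hne : H.connectedComponentMk v ≠ H.connectedComponentMk u := fun h =>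
    isBridge_iff.1 he (ConnectedComponent.exact h).symm
  have hinj : Set.InjOn π {H.connectedComponentMk u}ᶜ := by
    intro c hc c' hc' hcc'
    induction c using ConnectedComponent.ind with | _ x
    induction c' using ConnectedComponent.ind with | _ y
    have hxy : G.Reachable x y := ConnectedComponent.exact hcc'
    simp only [Set.mem_compl_iff, Set.mem_singleton_iff, ConnectedComponent.eq] at hc hc' ⊢
    rcases reachable_deleteEdges_or (u := u) (v := v) hxy with h | h | h
    · exact h
    · exact absurd h hc
    rcases reachable_deleteEdges_or (u := u) (v := v) hxy.symm with h' | h' | h'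
    · exact h'.symm
    · exact absurd h' hc'
    · exact h.trans h'.symm
  have himage : π '' {H.connectedComponentMk u}ᶜ = Set.univ := by
    refine Set.eq_univ_of_forall fun c => ?_
    induction c using ConnectedComponent.ind with | _ x
    by_cases hx : H.connectedComponentMk x = H.connectedComponentMk u
    · refine ⟨H.connectedComponentMk v, hne, ConnectedComponent.sound ?_⟩
      exact (Adj.reachable (mem_edgeSet G |>.1 heG)).symm.trans
        ((ConnectedComponent.exact hx).symm.mono (deleteEdges_le _))
    · exact ⟨H.connectedComponentMk x, hx, rfl⟩
  rw [← Set.ncard_univ G.ConnectedComponent, ← himage, hinj.ncard_image,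
    ← Set.ncard_add_ncard_compl {H.connectedComponentMk u}, Set.ncard_singleton, add_comm]

lemma card_connectedComponent_deleteEdges [Finite V] (hG : G.IsAcyclic) {C : Set (Sym2 V)}
    (hC : C ⊆ G.edgeSet) :
    Nat.card (G.deleteEdges C).ConnectedComponent = Nat.card G.ConnectedComponent + C.ncard := by
  induction C, C.toFinite using Set.Finite.induction_on with
  | empty => simp
  | @insert e C he _ ih =>
    obtain ⟨heG, hC⟩ := Set.insert_subset_iff.1 hC
    have hmem : e ∈ (G.deleteEdges C).edgeSet := by
      rw [edgeSet_deleteEdges]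
      exact ⟨heG, he⟩
    have hbridge : (G.deleteEdges C).IsBridge e :=
      isAcyclic_iff_forall_isBridge.1 (hG.anti (deleteEdges_le C)) hmem
    rw [Set.insert_eq, Set.union_comm, ← deleteEdges_deleteEdges,
      card_connectedComponent_deleteEdges_singleton hbridge hmem, ih hC,
      Set.union_comm, ← Set.insert_eq, Set.ncard_insert_of_notMem he, add_assoc]

lemma card_connectedComponent_deleteEdges_of_isTree [Finite V] (hG : G.IsTree) {C : Set (Sym2 V)}
    (hC : C ⊆ G.edgeSet) : Nat.card (G.deleteEdges C).ConnectedComponent = C.ncard + 1 := by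
  have := hG.connected.preconnected.subsingleton_connectedComponent
  have := hG.connected.nonempty
  rw [card_connectedComponent_deleteEdges hG.isAcyclic hC,
    Nat.card_of_subsingleton (G.connectedComponentMk (Classical.arbitrary V)), add_comm]

end Components

section ComponentSizes

variable {V : Type} [Fintype V] {G : SimpleGraph V}

lemma compSizes_eq_map [Fintype G.ConnectedComponent] :
    compSizes G = (Finset.univ : Finset G.ConnectedComponent).val.map fun c => c.supp.ncard := by
  classical
  rw [compSizes, ← Finset.image_univ_of_surjective (f := G.connectedComponentMk) Quot.mk_surjective]

lemma card_compSizes : (compSizes G).card = Nat.card G.ConnectedComponent := by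
  have := Fintype.ofFinite G.ConnectedComponent
  rw [compSizes_eq_map, Multiset.card_map, Finset.card_val, Finset.card_univ,
    Nat.card_eq_fintype_card]

lemma compSizes_eq_map_ncard {ι : Type*} [Fintype ι] (S : ι → Set V)
    (hne : ∀ i, (S i).Nonempty) (hdisj : Pairwise (Function.onFun Disjoint S))
    (hS : ∀ i ⦃x y⦄, G.Adj x y → x ∈ S i → y ∈ S i)
    (hcard : Nat.card G.ConnectedComponent = Fintype.card ι) :
    compSizes G = Finset.univ.val.map fun i => (S i).ncard := by
  have := Fintype.ofFinite G.ConnectedComponent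
  choose x hx using hne
  have hclosed {i : ι} {y z : V} (hyz : G.connectedComponentMk y = G.connectedComponentMk z)
      (hy : y ∈ S i) : z ∈ S i := mem_of_reachable (hS i) (ConnectedComponent.exact hyz) hy
  have hindex {i j : ι} {y : V} (hi : y ∈ S i) (hj : y ∈ S j) : i = j := by
    by_contra hij
    exact Set.disjoint_left.1 (hdisj hij) hi hj
  have hbij : Function.Bijective fun i => G.connectedComponentMk (x i) := by
    rw [Fintype.bijective_iff_injective_and_card, ← hcard, Nat.card_eq_fintype_card]
    exact ⟨fun i j hij => hindex (hclosed hij (hx i)) (hx j), rfl⟩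
  have hsupp (i : ι) : (G.connectedComponentMk (x i)).supp = S i := by
    ext y
    rw [ConnectedComponent.mem_supp_iff]
    refine ⟨fun hy => hclosed hy.symm (hx i), fun hy => ?_⟩
    obtain ⟨j, hj : G.connectedComponentMk (x j) = _⟩ := hbij.2 (G.connectedComponentMk y)
    rw [hindex hy (hclosed hj (hx j)), hj]
  rw [compSizes_eq_map, ← Finset.map_univ_equiv (Equiv.ofBijective _ hbij), Finset.map_val,
    Multiset.map_map]
  exact Multiset.map_congr rfl fun i _ => congrArg Set.ncard (hsupp i)

end ComponentSizes

section Branches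

variable {V : Type*} {T : SimpleGraph V}

/-- The branch of a graph at a dart `e`: the connected component of the head `e.snd` once the edge
of `e` is deleted. In a tree these are the vertex sets of the rooted subtrees, with root `e.snd`. -/
def branch (e : T.Dart) : Set V :=
  ((T.deleteEdges {e.edge}).connectedComponentMk e.snd).supp

/-- The order of a branch. -/
noncomputable def order (e : T.Dart) : ℕ :=
  (branch e).ncard

variable {e f p q : T.Dart} {x y : V}

lemma exists_dart_edge_eq {s : Sym2 V} (hs : s ∈ T.edgeSet) : ∃ e : T.Dart, e.edge = s := by
  induction s with | h u v
  exact ⟨⟨(u, v), hs⟩, rfl⟩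

lemma snd_mem_branch (e : T.Dart) : e.snd ∈ branch e :=
  ConnectedComponent.connectedComponentMk_mem

lemma mem_branch_of_adj (hxy : (T.deleteEdges {e.edge}).Adj x y) (hx : x ∈ branch e) :
    y ∈ branch e :=
  ConnectedComponent.mem_supp_of_adj_mem_supp _ hx hxy

lemma fst_notMem_branch (hT : T.IsAcyclic) (e : T.Dart) : e.fst ∉ branch e := fun h =>
  isBridge_iff.1 (isAcyclic_iff_forall_adj_isBridge.1 hT e.adj) (ConnectedComponent.exact h)

lemma eq_snd_and_eq_fst_of_adj (hT : T.IsAcyclic) (hxy : T.Adj x y) (hx : x ∈ branch e)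
    (hy : y ∉ branch e) : x = e.snd ∧ y = e.fst := by
  by_cases he : s(x, y) = e.edge
  · obtain ⟨rfl, rfl⟩ | ⟨rfl, rfl⟩ := Sym2.eq_iff.1 he
    · exact absurd hx (fst_notMem_branch hT e)
    · exact ⟨rfl, rfl⟩
  · exact absurd (mem_branch_of_adj ((deleteEdges_adj ..).2 ⟨hxy, he⟩) hx) hy

lemma branch_subset_of_mem (hT : T.IsTree) (hp : p.snd ∈ branch q) (hq : q.fst ∉ branch p) :
    branch p ⊆ branch q := by
  by_contra hpq
  obtain ⟨z, hzp, hzq⟩ := Set.not_subset.1 hpq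
  have hfst := mem_of_preconnected hT.connected.preconnected
    (S := branch p \ branch q) ?_ ⟨hzp, hzq⟩ p.fst
  · exact fst_notMem_branch hT.isAcyclic p hfst.1
  rintro x y hxy ⟨hxp, hxq⟩
  by_contra hy
  have h₁ := eq_snd_and_eq_fst_of_adj (e := p) hT.isAcyclic hxy hxp
  have h₂ := fun hy => eq_snd_and_eq_fst_of_adj (e := q) hT.isAcyclic hxy.symm hy hxq
  grind

lemma disjoint_branch_of_notMem (hT : T.IsTree) (hp : p.snd ∉ branch q) (hq : q.snd ∉ branch p) :
    Disjoint (branch p) (branch q) := by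
  rw [Set.disjoint_left]
  intro z hzp hzq
  have hfst := mem_of_preconnected hT.connected.preconnected
    (S := branch p ∩ branch q) ?_ ⟨hzp, hzq⟩ p.fst
  · exact fst_notMem_branch hT.isAcyclic p hfst.1
  rintro x y hxy ⟨hxp, hxq⟩
  by_contra hy
  have h₁ := eq_snd_and_eq_fst_of_adj (e := p) hT.isAcyclic hxy hxp
  have h₂ := eq_snd_and_eq_fst_of_adj (e := q) hT.isAcyclic hxy hxq
  grind

lemma branch_symm (hT : T.IsTree) (e : T.Dart) : branch e.symm = (branch e)ᶜ := by
  have hdisj : Disjoint (branch e.symm) (branch e) :=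
    disjoint_branch_of_notMem hT (fst_notMem_branch hT.isAcyclic e)
      (fst_notMem_branch hT.isAcyclic e.symm)
  refine (IsCompl.of_eq hdisj.eq_bot (Set.eq_univ_of_forall ?_)).eq_compl
  refine mem_of_preconnected hT.connected.preconnected ?_ (.inr (snd_mem_branch e))
  rintro x y hxy (hx | hx) <;> by_contra hy
  · have h := eq_snd_and_eq_fst_of_adj hT.isAcyclic hxy hx fun h => hy (.inl h)
    exact hy (.inr (h.2 ▸ snd_mem_branch e))
  · have h := eq_snd_and_eq_fst_of_adj hT.isAcyclic hxy hx fun h => hy (.inr h)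
    exact hy (.inl (h.2 ▸ snd_mem_branch e.symm))

lemma branch_laminar (hT : T.IsTree) (p q : T.Dart) :
    Disjoint (branch p) (branch q) ∨ branch p ⊆ branch q ∨ branch q ⊆ branch p ∨
      (branch p)ᶜ ⊆ branch q := by
  by_cases hpq : p.snd ∈ branch q ∧ q.fst ∉ branch p
  · exact .inr (.inl (branch_subset_of_mem hT hpq.1 hpq.2))
  by_cases hqp : q.snd ∈ branch p ∧ p.fst ∉ branch q
  · exact .inr (.inr (.inl (branch_subset_of_mem hT hqp.1 hqp.2)))
  by_cases hfst : p.fst ∈ branch q ∧ q.fst ∈ branch p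
  · rw [← branch_symm hT]
    refine .inr (.inr (.inr (branch_subset_of_mem hT hfst.1 ?_)))
    rw [branch_symm hT]
    exact fun h => h hfst.2
  have hp := eq_snd_and_eq_fst_of_adj (e := q) hT.isAcyclic p.adj
  have hq := eq_snd_and_eq_fst_of_adj (e := p) hT.isAcyclic q.adj
  have := snd_mem_branch p
  have := snd_mem_branch q
  exact .inl (disjoint_branch_of_notMem hT (by grind) (by grind))

lemma branch_injective (hT : T.IsTree) : Function.Injective (branch (T := T)) := by
  intro p q hpq
  have h := eq_snd_and_eq_fst_of_adj hT.isAcyclic p.adj.symm (hpq ▸ snd_mem_branch p)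
    (hpq ▸ fst_notMem_branch hT.isAcyclic p)
  exact Dart.ext _ _ (Prod.ext h.2 h.1)

lemma exists_dart_fst_eq_of_ne {t : V} (hT : T.IsTree) (hx : x ≠ t) :
    ∃ e : T.Dart, e.fst = t ∧ x ∈ branch e := by
  have hreach := mem_of_preconnected hT.connected.preconnected (x := t)
    (S := insert t {x | ∃ e : T.Dart, e.fst = t ∧ x ∈ branch e}) ?_ (Set.mem_insert ..) x
  · exact hreach.resolve_left hx
  rintro x y hxy hx
  by_cases hy : y = t
  · exact .inl hy
  obtain rfl | ⟨e, rfl, hxe⟩ := hx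
  · exact .inr ⟨⟨(x, y), hxy⟩, rfl, snd_mem_branch _⟩
  · refine .inr ⟨e, rfl, ?_⟩
    by_contra hye
    exact hy (eq_snd_and_eq_fst_of_adj hT.isAcyclic hxy hxe hye).2

lemma exists_dart_branch_subset {t : V} (hT : T.IsTree) (ht : t ∉ branch p) :
    ∃ e : T.Dart, e.fst = t ∧ branch p ⊆ branch e := by
  have hne : p.snd ≠ t := fun h => ht (h ▸ snd_mem_branch p)
  obtain ⟨e, rfl, hpe⟩ := exists_dart_fst_eq_of_ne hT hne
  exact ⟨e, rfl, branch_subset_of_mem hT hpe ht⟩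

lemma mem_branch_iff_of_adj {C : Set (Sym2 V)} (he : e.edge ∈ C) {x y : V}
    (hxy : (T.deleteEdges C).Adj x y) : x ∈ branch e ↔ y ∈ branch e := by
  have hxy' : (T.deleteEdges {e.edge}).Adj x y :=
    deleteEdges_anti (Set.singleton_subset_iff.2 he) hxy
  exact ⟨mem_branch_of_adj hxy', mem_branch_of_adj hxy'.symm⟩

lemma edge_ne_of_branch_subset (hT : T.IsAcyclic) (hpq : branch p ⊆ branch q) (hne : p ≠ q) :
    p.edge ≠ q.edge := by
  intro h
  obtain rfl | rfl := dart_edge_eq_iff p q |>.1 h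
  · exact hne rfl
  · exact fst_notMem_branch hT q (hpq (snd_mem_branch q.symm))

section Order

variable [Finite V]

lemma order_add_order_symm (hT : T.IsTree) (e : T.Dart) :
    order e + order e.symm = Nat.card V := by
  rw [order, order, branch_symm hT, Set.ncard_add_ncard_compl]

lemma order_pos (e : T.Dart) : 0 < order e :=
  Set.ncard_pos (Set.toFinite _) |>.2 ⟨_, snd_mem_branch e⟩

lemma order_le_of_subset (h : branch p ⊆ branch q) : order p ≤ order q :=
  Set.ncard_le_ncard h

lemma eq_of_branch_subset (hT : T.IsTree) (h : branch p ⊆ branch q) (hle : order q ≤ order p) :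
    p = q :=
  branch_injective hT (Set.eq_of_subset_of_ncard_le h hle)

lemma disjoint_or_subset_of_order_le (hT : T.IsTree) (hpq : order p ≤ order q)
    (hq : 2 * order q ≤ Nat.card V) :
    Disjoint (branch p) (branch q) ∨ branch p ⊆ branch q := by
  obtain h | h | h | h := branch_laminar hT p q
  · exact .inl h
  · exact .inr h
  · exact .inr (by rw [eq_of_branch_subset hT h hpq])
  · left
    rw [← branch_symm hT] at h
    have := order_add_order_symm hT p
    rw [← eq_of_branch_subset hT h (by omega), branch_symm hT]
    exact disjoint_compl_right

lemma exists_dart_edge_eq_and_two_mul_order_le (hT : T.IsTree) {s : Sym2 V} (hs : s ∈ T.edgeSet) :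
    ∃ e : T.Dart, e.edge = s ∧ 2 * order e ≤ Nat.card V := by
  obtain ⟨e, rfl⟩ := exists_dart_edge_eq hs
  have horder := order_add_order_symm hT e
  obtain h | h := le_total (order e) (order e.symm)
  · exact ⟨e, rfl, by omega⟩
  · exact ⟨e.symm, e.edge_symm, by omega⟩

lemma eq_of_edge_eq (hT : T.IsTree) (he : 2 * order e < Nat.card V)
    (hf : 2 * order f < Nat.card V) (hef : e.edge = f.edge) : e = f := by
  obtain h | rfl := dart_edge_eq_iff e f |>.1 hef
  · exact h
  · have := order_add_order_symm hT f
    omega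

end Order

end Branches

section Children

variable {V : Type*} {T : SimpleGraph V}

/-- The dart `f` is a child of `e` if it leaves the head of `e` without going back along `e`; the
branches at the children of `e` are the branches that remain when the root is removed from
`branch e`. -/
def IsChild (e f : T.Dart) : Prop :=
  f.fst = e.snd ∧ f.snd ≠ e.fst

/-- `f` is the only child of `e`, i.e. `branch e` consists of its root with `branch f` attached. -/
def IsOnlyChild (e f : T.Dart) : Prop :=
  ∀ g, IsChild e g ↔ g = f

variable {e f g p : T.Dart} {x : V}

lemma IsChild.branch_subset (hT : T.IsTree) (h : IsChild e f) : branch f ⊆ branch e := by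
  refine branch_subset_of_mem hT ?_ fun hfst => h.2 ?_
  · by_contra hsnd
    exact h.2 (eq_snd_and_eq_fst_of_adj hT.isAcyclic f.adj (h.1 ▸ snd_mem_branch e) hsnd).2
  · have hsnd : e.snd ∉ branch f := h.1 ▸ fst_notMem_branch hT.isAcyclic f
    exact (eq_snd_and_eq_fst_of_adj hT.isAcyclic e.adj hfst hsnd).1.symm

lemma IsChild.disjoint_branch (hT : T.IsTree) (hf : IsChild e f) (hg : IsChild e g)
    (hne : f ≠ g) : Disjoint (branch f) (branch g) := by
  have hfst : f.fst = g.fst := hf.1.trans hg.1.symm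
  refine disjoint_branch_of_notMem hT (fun h => hne ?_) fun h => hne ?_
  · exact Dart.ext _ _ (Prod.ext hfst (eq_snd_and_eq_fst_of_adj hT.isAcyclic f.adj.symm h
      (hfst ▸ fst_notMem_branch hT.isAcyclic g)).1)
  · exact Dart.ext _ _ (Prod.ext hfst (eq_snd_and_eq_fst_of_adj hT.isAcyclic g.adj.symm h
      (hfst ▸ fst_notMem_branch hT.isAcyclic f)).1.symm)

lemma exists_isChild_of_mem_branch (hT : T.IsTree) (hx : x ∈ branch e) (hne : x ≠ e.snd) :
    ∃ f, IsChild e f ∧ x ∈ branch f := by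
  obtain ⟨f, hf, hxf⟩ := exists_dart_fst_eq_of_ne hT hne
  refine ⟨f, ⟨hf, fun hsnd => ?_⟩, hxf⟩
  obtain rfl : f = e.symm := Dart.ext _ _ (Prod.ext hf hsnd)
  exact (branch_symm hT e ▸ hxf) hx

lemma exists_isChild_branch_subset (hT : T.IsTree) (hpe : branch p ⊆ branch e) (hne : p ≠ e) :
    ∃ f, IsChild e f ∧ branch p ⊆ branch f := by
  have hsnd : e.snd ∉ branch p := fun h => by
    have := eq_snd_and_eq_fst_of_adj hT.isAcyclic e.adj.symm h
      fun hfst => fst_notMem_branch hT.isAcyclic e (hpe hfst)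
    exact hne (Dart.ext _ _ (Prod.ext this.2.symm this.1.symm))
  obtain ⟨f, hf, hpf⟩ := exists_isChild_of_mem_branch hT (hpe (snd_mem_branch p))
    fun h => hsnd (h ▸ snd_mem_branch p)
  exact ⟨f, hf, branch_subset_of_mem hT hpf (hf.1 ▸ hsnd)⟩

lemma IsOnlyChild.isChild (h : IsOnlyChild e f) : IsChild e f :=
  (h f).2 rfl

lemma IsOnlyChild.branch_eq_insert (hT : T.IsTree) (h : IsOnlyChild e f) :
    branch e = insert e.snd (branch f) := by
  refine Set.Subset.antisymm (fun x hx => ?_)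
    (Set.insert_subset (snd_mem_branch e) (h.isChild.branch_subset hT))
  by_cases hne : x = e.snd
  · exact .inl hne
  obtain ⟨g, hg, hxg⟩ := exists_isChild_of_mem_branch hT hx hne
  exact .inr ((h g).1 hg ▸ hxg)

lemma IsOnlyChild.branch_subset_iff (hT : T.IsTree) (h : IsOnlyChild e f) :
    branch p ⊆ branch e ↔ p = e ∨ branch p ⊆ branch f := by
  refine ⟨fun hpe => ?_, ?_⟩
  · by_cases hne : p = e
    · exact .inl hne
    obtain ⟨g, hg, hpg⟩ := exists_isChild_branch_subset hT hpe hne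
    exact .inr ((h g).1 hg ▸ hpg)
  · rintro (rfl | hpf)
    exacts [subset_rfl, hpf.trans (h.isChild.branch_subset hT)]

lemma IsOnlyChild.order_eq [Finite V] (hT : T.IsTree) (h : IsOnlyChild e f) :
    order e = order f + 1 := by
  rw [order, h.branch_eq_insert hT, Set.ncard_insert_of_notMem]
  · rfl
  · exact h.isChild.1 ▸ fst_notMem_branch hT.isAcyclic f

end Children

section Multisets

variable {α : Type*} {a b c x y z : α}

lemma pair_eq_pair_iff :
    ({a, b} : Multiset α) = {x, y} ↔ a = x ∧ b = y ∨ a = y ∧ b = x := by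
  constructor
  · intro h
    have ha : a ∈ ({x, y} : Multiset α) := h ▸ Multiset.mem_cons_self a _
    obtain rfl | rfl : a = x ∨ a = y := by simpa using ha
    · exact .inl ⟨rfl, by simpa using h⟩
    · exact .inr ⟨rfl, by simpa using h.trans (Multiset.pair_comm x a)⟩
  · rintro (⟨rfl, rfl⟩ | ⟨rfl, rfl⟩)
    exacts [rfl, Multiset.pair_comm a b]

lemma triple_eq_triple_iff :
    ({a, b, c} : Multiset α) = {x, y, z} ↔
      a = x ∧ ({b, c} : Multiset α) = {y, z} ∨ a = y ∧ ({b, c} : Multiset α) = {x, z} ∨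
        a = z ∧ ({b, c} : Multiset α) = {x, y} := by
  have hy : ({x, y, z} : Multiset α) = {y, x, z} := Multiset.cons_swap x y {z}
  have hz : ({x, y, z} : Multiset α) = {z, x, y} :=
    (congrArg (x ::ₘ ·) (Multiset.pair_comm y z)).trans (Multiset.cons_swap x z {y})
  constructor
  · intro h
    have ha : a ∈ ({x, y, z} : Multiset α) := h ▸ Multiset.mem_cons_self a _
    obtain rfl | rfl | rfl : a = x ∨ a = y ∨ a = z := by simpa using ha
    · exact .inl ⟨rfl, (Multiset.cons_inj_right a).1 h⟩
    · exact .inr (.inl ⟨rfl, (Multiset.cons_inj_right a).1 (h.trans hy)⟩)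
    · exact .inr (.inr ⟨rfl, (Multiset.cons_inj_right a).1 (h.trans hz)⟩)
  · rintro (⟨rfl, h⟩ | ⟨rfl, h⟩ | ⟨rfl, h⟩)
    · exact congrArg (a ::ₘ ·) h
    · exact (congrArg (a ::ₘ ·) h).trans hy.symm
    · exact (congrArg (a ::ₘ ·) h).trans hz.symm

end Multisets

section Cuts

variable {V : Type} [Fintype V] {T : SimpleGraph V} {p q : T.Dart}

lemma cCoeff_eq_ncard_deleteEdges (G : SimpleGraph V) (lam : Multiset ℕ) :
    cCoeff G lam = {C | C ⊆ G.edgeSet ∧ compSizes (G.deleteEdges C) = lam}.ncard := by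
  have hcompl {F : Set (Sym2 V)} (hF : F ⊆ G.edgeSet) :
      fromEdgeSet F = G.deleteEdges (G.edgeSet \ F) := by
    calc fromEdgeSet F = fromEdgeSet (G.edgeSet \ (G.edgeSet \ F)) := by
          rw [Set.sdiff_sdiff_cancel_left hF]
      _ = G.deleteEdges (G.edgeSet \ F) := by
          rw [← deleteEdges_fromEdgeSet, fromEdgeSet_edgeSet]
  refine Set.ncard_congr (fun F _ => G.edgeSet \ F) ?_ ?_ ?_
  · rintro F ⟨hF, rfl⟩
    exact ⟨Set.sdiff_subset, by rw [hcompl hF]⟩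
  · intro F F' hF hF' h
    rw [← Set.sdiff_sdiff_cancel_left hF.1, h, Set.sdiff_sdiff_cancel_left hF'.1]
  · rintro C ⟨hC, rfl⟩
    refine ⟨G.edgeSet \ C, ⟨Set.sdiff_subset, ?_⟩, Set.sdiff_sdiff_cancel_left hC⟩
    rw [hcompl Set.sdiff_subset, Set.sdiff_sdiff_cancel_left hC]

lemma compSizes_deleteEdges_edge (hT : T.IsTree) (e : T.Dart) :
    compSizes (T.deleteEdges {e.edge}) = {order e, order e.symm} := by
  rw [compSizes_eq_map_ncard ![branch e, branch e.symm]]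
  · rfl
  · simpa [Fin.forall_fin_succ] using ⟨⟨_, snd_mem_branch e⟩, ⟨_, snd_mem_branch e.symm⟩⟩
  · simp [Pairwise, Function.onFun, Fin.forall_fin_succ, branch_symm hT, disjoint_compl_left,
      disjoint_compl_right]
  · intro i x y hxy
    have he : x ∈ branch e ↔ y ∈ branch e := mem_branch_iff_of_adj (Set.mem_singleton _) hxy
    fin_cases i <;> simp [branch_symm hT, he]
  · rw [card_connectedComponent_deleteEdges_of_isTree hT, Set.ncard_singleton, Fintype.card_fin]
    exact Set.singleton_subset_iff.2 e.edge_mem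

lemma compSizes_deleteEdges_of_subset (hT : T.IsTree) (hpq : branch p ⊆ branch q) (hne : p ≠ q) :
    compSizes (T.deleteEdges {p.edge, q.edge}) =
      {order p, order q - order p, order q.symm} := by
  have hsub : branch p ⊂ branch q :=
    hpq.ssubset_of_ne ((branch_injective hT).ne hne)
  rw [compSizes_eq_map_ncard ![branch p, branch q \ branch p, branch q.symm]]
  · rw [order, order, ← Set.ncard_sdiff hpq]
    rfl
  · simpa [Fin.forall_fin_succ] using
      ⟨⟨_, snd_mem_branch p⟩, Set.nonempty_of_ssubset hsub, ⟨_, snd_mem_branch q.symm⟩⟩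
  · have hsymm : Disjoint (branch q) (branch q.symm) := branch_symm hT q ▸ disjoint_compl_right
    simp [Pairwise, Function.onFun, Fin.forall_fin_succ, Set.disjoint_sdiff_left,
      Set.disjoint_sdiff_right, hsymm.mono_left hpq, hsymm.symm.mono_right hpq,
      hsymm.mono_left Set.sdiff_subset, hsymm.symm.mono_right Set.sdiff_subset]
  · intro i x y hxy
    have hp : x ∈ branch p ↔ y ∈ branch p := mem_branch_iff_of_adj (Set.mem_insert ..) hxy
    have hq : x ∈ branch q ↔ y ∈ branch q :=
      mem_branch_iff_of_adj (Set.mem_insert_of_mem _ (Set.mem_singleton _)) hxy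
    fin_cases i <;> simp [branch_symm hT, hp, hq]
  · rw [card_connectedComponent_deleteEdges_of_isTree hT, Set.ncard_pair, Fintype.card_fin]
    · exact edge_ne_of_branch_subset hT.isAcyclic hpq hne
    · exact Set.pair_subset_iff.2 ⟨p.edge_mem, q.edge_mem⟩

lemma compSizes_deleteEdges_of_disjoint (hT : T.IsTree) (hpq : Disjoint (branch p) (branch q))
    (hne : p ≠ q.symm) :
    compSizes (T.deleteEdges {p.edge, q.edge}) =
      {order p, order q.symm - order p, order q} := by
  have hsub : branch p ⊆ branch q.symm := branch_symm hT q ▸ hpq.subset_compl_right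
  simpa using compSizes_deleteEdges_of_subset hT hsub hne

end Cuts

section CountingCuts

variable {V : Type*} [Fintype V] {T : SimpleGraph V} {e p q : T.Dart} {a b k : ℕ}

open Classical in
/-- The darts whose branch has order `k`. -/
noncomputable def dartsOfOrder (T : SimpleGraph V) (k : ℕ) : Finset T.Dart := {e | order e = k}

open Classical in
/-- The darts whose branch has order `k` and lies inside `branch e`. -/
noncomputable def subDarts (e : T.Dart) (k : ℕ) : Finset T.Dart :=
  {p | order p = k ∧ branch p ⊆ branch e}

open Classical in
/-- The darts whose branch has order `k` and is disjoint from `branch e`. -/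
noncomputable def disjointDarts (e : T.Dart) (k : ℕ) : Finset T.Dart :=
  {p | order p = k ∧ Disjoint (branch p) (branch e)}

open Classical in
/-- The pairs `⟨q, p⟩` such that deleting the edges of `p` and `q` separates components of orders
`a` and `b` from the rest of the tree: either the branches are disjoint and have orders `a` and
`b`, or they are nested and the outer one, of order `a + b`, is split by the inner one. -/
noncomputable def cutPairs (T : SimpleGraph V) (a b : ℕ) : Finset (Σ _ : T.Dart, T.Dart) :=
  ((dartsOfOrder T a).sigma fun q => disjointDarts q b) ∪
    (dartsOfOrder T (a + b)).sigma fun q => subDarts q a ∪ subDarts q b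

@[simp]
lemma mem_dartsOfOrder : e ∈ dartsOfOrder T k ↔ order e = k := by
  simp [dartsOfOrder]

@[simp]
lemma mem_subDarts : p ∈ subDarts e k ↔ order p = k ∧ branch p ⊆ branch e := by
  simp [subDarts]

@[simp]
lemma mem_disjointDarts :
    p ∈ disjointDarts e k ↔ order p = k ∧ Disjoint (branch p) (branch e) := by
  simp [disjointDarts]

lemma mem_cutPairs : ⟨q, p⟩ ∈ cutPairs T a b ↔
    (order q = a ∧ order p = b ∧ Disjoint (branch p) (branch q)) ∨
      order q = a + b ∧ (order p = a ∨ order p = b) ∧ branch p ⊆ branch q := by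
  simp [cutPairs, or_and_right]

lemma card_cutPairs (hab : a ≠ b) (hb : 0 < b) :
    (cutPairs T a b).card =
      ∑ q ∈ dartsOfOrder T a, (disjointDarts q b).card +
        ∑ q ∈ dartsOfOrder T (a + b), ((subDarts q a).card + (subDarts q b).card) := by
  classical
  rw [cutPairs, Finset.card_union_of_disjoint, Finset.card_sigma, Finset.card_sigma]
  · congr! 2 with q
    refine Finset.card_union_of_disjoint (Finset.disjoint_left.2 fun p hpa hpb => hab ?_)
    rw [← (mem_subDarts.1 hpa).1, (mem_subDarts.1 hpb).1]
  · refine Finset.disjoint_left.2 fun ⟨q, p⟩ ha hab => ?_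
    simp only [Finset.mem_sigma, mem_dartsOfOrder] at ha hab
    omega

lemma card_disjointDarts_add_card_subDarts (hT : T.IsTree) (hk : k ≤ order e)
    (he : 2 * order e ≤ Nat.card V) :
    (disjointDarts e k).card + (subDarts e k).card = (dartsOfOrder T k).card := by
  classical
  rw [← Finset.card_union_of_disjoint]
  · congr 1
    ext p
    simp only [Finset.mem_union, mem_disjointDarts, mem_subDarts, mem_dartsOfOrder, ← and_or_left,
      and_iff_left_iff_imp]
    rintro rfl
    exact disjoint_or_subset_of_order_le hT hk he
  · simp only [Finset.disjoint_left, mem_disjointDarts, mem_subDarts]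
    rintro p ⟨-, hdisj⟩ ⟨-, hpe⟩
    exact Set.disjoint_left.1 hdisj (snd_mem_branch p) (hpe (snd_mem_branch p))

lemma order_lt_and_two_mul_order_lt_of_mem_cutPairs (hb : 0 < b) (hba : b < a)
    (hab : 2 * (a + b) < Nat.card V) (h : ⟨q, p⟩ ∈ cutPairs T a b) :
    order p < order q ∧ 2 * order q < Nat.card V := by
  rw [mem_cutPairs] at h
  omega

end CountingCuts

section CutCoefficients

variable {V : Type} [Fintype V] {T : SimpleGraph V} {p q : T.Dart} {a b k : ℕ}

lemma cCoeff_pair (hT : T.IsTree) (hk : 2 * k < Nat.card V) :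
    cCoeff T {Nat.card V - k, k} = (dartsOfOrder T k).card := by
  rw [cCoeff_eq_ncard_deleteEdges, ← Set.ncard_coe_finset]
  symm
  refine Set.ncard_congr (fun e _ => {e.edge}) ?_ ?_ ?_
  · intro e he
    have horder := order_add_order_symm hT e
    rw [Finset.mem_coe, mem_dartsOfOrder] at he
    refine ⟨Set.singleton_subset_iff.2 e.edge_mem, ?_⟩
    rw [compSizes_deleteEdges_edge hT, pair_eq_pair_iff]
    omega
  · intro e f he hf hef
    rw [Finset.mem_coe, mem_dartsOfOrder] at he hf
    exact eq_of_edge_eq hT (by omega) (by omega) (Set.singleton_injective hef)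
  · rintro C ⟨hC, hsizes⟩
    have hcard := card_connectedComponent_deleteEdges_of_isTree hT hC
    rw [← card_compSizes, hsizes, Multiset.card_pair] at hcard
    obtain ⟨s, rfl⟩ := Set.ncard_eq_one.1 (Nat.succ.inj hcard).symm
    obtain ⟨e, rfl⟩ := exists_dart_edge_eq (Set.singleton_subset_iff.1 hC)
    rw [compSizes_deleteEdges_edge hT, pair_eq_pair_iff] at hsizes
    obtain ⟨-, h⟩ | ⟨h, -⟩ := hsizes
    · exact ⟨e.symm, by simpa using h, by rw [e.edge_symm]⟩
    · exact ⟨e, by simpa using h, rfl⟩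

lemma compSizes_eq_iff_mem_cutPairs (hT : T.IsTree) (hb : 0 < b) (hba : b < a)
    (hab : 2 * (a + b) < Nat.card V) (hne : p.edge ≠ q.edge) (hpq : order p ≤ order q)
    (hq : 2 * order q ≤ Nat.card V) :
    compSizes (T.deleteEdges {p.edge, q.edge}) = {Nat.card V - (a + b), a, b} ↔
      ⟨q, p⟩ ∈ cutPairs T a b := by
  have horder := order_add_order_symm hT q
  have hp := order_pos p
  have hdisj_iff := disjoint_or_subset_of_order_le hT hpq hq
  rw [mem_cutPairs]
  by_cases hdisj : Disjoint (branch p) (branch q)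
  · have hsub : ¬ branch p ⊆ branch q := fun h =>
      Set.disjoint_left.1 hdisj (snd_mem_branch p) (h (snd_mem_branch p))
    rw [compSizes_deleteEdges_of_disjoint hT hdisj, triple_eq_triple_iff]
    · simp only [pair_eq_pair_iff, hdisj, hsub, and_false, or_false, and_true]
      omega
    · rintro rfl
      exact hne q.edge_symm
  · have hsub := hdisj_iff.resolve_left hdisj
    rw [compSizes_deleteEdges_of_subset hT hsub, triple_eq_triple_iff]
    · simp only [pair_eq_pair_iff, hdisj, hsub, and_false, false_or, and_true]
      omega
    · rintro rfl
      exact hne rfl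

lemma cCoeff_triple (hT : T.IsTree) (hb : 0 < b) (hba : b < a)
    (hab : 2 * (a + b) < Nat.card V) :
    cCoeff T {Nat.card V - (a + b), a, b} = (cutPairs T a b).card := by
  rw [cCoeff_eq_ncard_deleteEdges, ← Set.ncard_coe_finset]
  symm
  refine Set.ncard_congr (fun c _ => {c.2.edge, c.1.edge}) ?_ ?_ ?_
  · rintro ⟨q, p⟩ h
    have horder := order_lt_and_two_mul_order_lt_of_mem_cutPairs hb hba hab h
    refine ⟨Set.pair_subset_iff.2 ⟨p.edge_mem, q.edge_mem⟩, ?_⟩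
    have hne : p.edge ≠ q.edge := fun hpq =>
      horder.1.ne (congrArg order (eq_of_edge_eq hT (by omega) horder.2 hpq))
    exact (compSizes_eq_iff_mem_cutPairs hT hb hba hab hne (by omega) (by omega)).2 h
  · rintro ⟨q, p⟩ ⟨q', p'⟩ h h' hC
    have horder := order_lt_and_two_mul_order_lt_of_mem_cutPairs hb hba hab h
    have horder' := order_lt_and_two_mul_order_lt_of_mem_cutPairs hb hba hab h'
    obtain ⟨hp : p.edge = p'.edge, hq : q.edge = q'.edge⟩ |
        ⟨hp : p.edge = q'.edge, hq : q.edge = p'.edge⟩ := Set.pair_eq_pair_iff.1 hC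
    · rw [eq_of_edge_eq hT (by omega) (by omega) hp, eq_of_edge_eq hT (by omega) (by omega) hq]
    · have hp := congrArg order (eq_of_edge_eq hT (by omega) (by omega) hp)
      have hq := congrArg order (eq_of_edge_eq hT (by omega) (by omega) hq)
      omega
  · rintro C ⟨hC, hsizes⟩
    have hcard := card_connectedComponent_deleteEdges_of_isTree hT hC
    rw [← card_compSizes, hsizes] at hcard
    obtain ⟨s, s', hne, rfl⟩ := Set.ncard_eq_two.1 (Nat.succ.inj hcard).symm
    rw [Set.pair_subset_iff] at hC
    obtain ⟨p, rfl, hp⟩ := exists_dart_edge_eq_and_two_mul_order_le hT hC.1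
    obtain ⟨q, rfl, hq⟩ := exists_dart_edge_eq_and_two_mul_order_le hT hC.2
    obtain h | h := le_total (order p) (order q)
    · exact ⟨⟨q, p⟩, (compSizes_eq_iff_mem_cutPairs hT hb hba hab hne h hq).1 hsizes, rfl⟩
    · rw [Set.pair_comm] at hsizes ⊢
      exact ⟨⟨p, q⟩, (compSizes_eq_iff_mem_cutPairs hT hb hba hab hne.symm h hp).1 hsizes, rfl⟩

end CutCoefficients

section Shapes

variable {V W W' : Type*} {T : SimpleGraph V} {R : SimpleGraph W} {r : W}
  {R' : SimpleGraph W'} {r' : W'} {e : T.Dart}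

/-- The branch of `e`, rooted at the head of `e`, is isomorphic to the rooted graph `(R, r)`. -/
def HasShape (e : T.Dart) (R : SimpleGraph W) (r : W) : Prop :=
  ∃ φ : R ↪g T, Set.range φ = branch e ∧ φ r = e.snd

lemma HasShape.order_eq (h : HasShape e R r) : order e = Nat.card W := by
  obtain ⟨φ, hφ, -⟩ := h
  rw [order, ← hφ, Set.ncard_range_of_injective φ.injective]

lemma isChild_iff_of_range_eq (hT : T.IsTree) {φ : R ↪g T} (hφ : Set.range φ = branch e)
    (hr : φ r = e.snd) {g : T.Dart} :
    IsChild e g ↔ g.fst = e.snd ∧ ∃ w, R.Adj r w ∧ φ w = g.snd := by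
  refine and_congr_right fun hfst => ⟨fun hsnd => ?_, ?_⟩
  · have hg : g.snd ∈ branch e := IsChild.branch_subset hT ⟨hfst, hsnd⟩ (snd_mem_branch g)
    obtain ⟨w, hw⟩ := hφ ▸ hg
    exact ⟨w, φ.map_adj_iff.1 (hr ▸ hfst ▸ hw ▸ g.adj), hw⟩
  · rintro ⟨w, -, hw⟩ hsnd
    exact fst_notMem_branch hT.isAcyclic e (hφ ▸ ⟨w, hw.trans hsnd⟩)

lemma HasShape.exists_isOnlyChild (hT : T.IsTree) (h : HasShape e R' r') (ι : R ↪g R')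
    (hι : Set.range ι = {r'}ᶜ) (hr : ∀ w, R'.Adj r' w ↔ w = ι r) :
    ∃ f, IsOnlyChild e f ∧ HasShape f R r := by
  obtain ⟨φ, hφ, hφr⟩ := h
  let f : T.Dart := ⟨(e.snd, φ (ι r)), hφr ▸ φ.map_adj_iff.2 ((hr _).2 rfl)⟩
  have honly : IsOnlyChild e f := fun g => by
    simp [isChild_iff_of_range_eq hT hφ hφr, hr, Dart.ext_iff, Prod.ext_iff, f, eq_comm]
  refine ⟨f, honly, φ.comp ι, ?_, rfl⟩
  have hfst : e.snd ∉ branch f := fst_notMem_branch hT.isAcyclic f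
  rw [Embedding.coe_comp, Set.range_comp, hι, Set.image_compl_eq_range_sdiff_image φ.injective, hφ,
    honly.branch_eq_insert hT, Set.image_singleton, hφr]
  simpa using hfst

end Shapes

section RootedSubtrees

variable {V W : Type} {T : SimpleGraph V} {R : SimpleGraph W} {r : W} {e : T.Dart}

lemma induce_branch_deleteEdges (hT : T.IsAcyclic) (e : T.Dart) :
    (T.deleteEdges {e.edge}).induce (branch e) = T.induce (branch e) := by
  ext ⟨x, hx⟩ ⟨y, hy⟩
  simp only [comap_adj, Function.Embedding.subtype_apply, deleteEdges_adj, Set.mem_singleton_iff,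
    and_iff_left_iff_imp]
  intro _ hxy
  have hfst : e.fst ∈ s(x, y) := hxy ▸ Sym2.mem_mk_left e.fst e.snd
  obtain h | h := Sym2.mem_iff.1 hfst
  exacts [fst_notMem_branch hT e (h ▸ hx), fst_notMem_branch hT e (h ▸ hy)]

lemma isRootedSubtree_iff_hasShape (hT : T.IsAcyclic) :
    IsRootedSubtree T e.edge e.snd R r ↔ HasShape e R r := by
  suffices (∃ φ : R ≃g (T.deleteEdges {e.edge}).induce (branch e), (φ r : V) = e.snd) ↔
      HasShape e R r from
    ⟨fun h => this.1 h.2.2, fun h => ⟨e.edge_mem, Sym2.mem_mk_right e.fst e.snd, this.2 h⟩⟩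
  rw [induce_branch_deleteEdges hT]
  constructor
  · rintro ⟨φ, hφ⟩
    refine ⟨(Embedding.induce _).comp φ.toEmbedding, ?_, hφ⟩
    ext x
    exact ⟨fun ⟨w, hw⟩ => hw ▸ (φ w).2, fun hx => ⟨φ.symm ⟨x, hx⟩, by simp⟩⟩
  · rintro ⟨φ, hφ, hr⟩
    rw [← hφ]
    exact ⟨φ.isoInduceRange, hr⟩

lemma rho_eq_ncard_hasShape [Fintype V] (hT : T.IsAcyclic) :
    rho T R r = {e : T.Dart | HasShape e R r}.ncard := by
  symm
  refine Set.ncard_congr (fun e _ => (e.edge, e.snd)) ?_ ?_ ?_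
  · exact fun e he => (isRootedSubtree_iff_hasShape hT).2 he
  · intro e f _ _ hef
    obtain ⟨hedge, hsnd⟩ := Prod.mk.inj hef
    obtain rfl | rfl := dart_edge_eq_iff e f |>.1 hedge
    · rfl
    · exact absurd hsnd f.adj.ne
  · rintro ⟨s, v⟩ h
    obtain ⟨u, rfl : s = s(v, u)⟩ := Sym2.mem_iff_exists.1 h.2.1
    have huv : T.Adj u v := (mem_edgeSet T).1 h.1 |>.symm
    let e : T.Dart := ⟨(u, v), huv⟩
    have hedge : e.edge = s(v, u) := Sym2.eq_swap
    exact ⟨e, (isRootedSubtree_iff_hasShape hT).1 (hedge ▸ h), by rw [hedge]⟩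

end RootedSubtrees

section PathsAndForks

/-- The path `R_{k+1,1}` without its root is `R_{k,1}`. -/
def pathGraphSucc (k : ℕ) : pathGraph k ↪g pathGraph (k + 1) where
  toFun := Fin.succ
  inj' := Fin.succ_injective k
  map_rel_iff' := by simp [pathGraph_adj]

lemma Rtwo_adj {k : ℕ} {i j : Fin k} :
    (Rtwo k).Adj i j ↔
      i ≠ j ∧ ((j.val = i.val + 1 ∧ j.val ≤ k - 2 ∨ i.val = k - 3 ∧ j.val = k - 1) ∨
        (i.val = j.val + 1 ∧ i.val ≤ k - 2 ∨ j.val = k - 3 ∧ i.val = k - 1)) :=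
  fromRel_adj ..

/-- For `k ≥ 3` the fork `R_{k+1,2}` without its root is `R_{k,2}`. -/
def RtwoSucc {k : ℕ} (hk : 3 ≤ k) : Rtwo k ↪g Rtwo (k + 1) where
  toFun := Fin.succ
  inj' := Fin.succ_injective k
  map_rel_iff' := by
    intro i j
    simp only [Function.Embedding.coeFn_mk, Rtwo_adj, ne_eq, Fin.succ_inj, Fin.val_succ]
    omega

variable {V : Type*} {T : SimpleGraph V} {e p : T.Dart} {k : ℕ}

/-- The branch of `e` is a path `R_{k,1}`. -/
def IsPathBranch (e : T.Dart) : Prop :=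
  ∃ k, ∃ h : 0 < k, HasShape e (pathGraph k) ⟨0, h⟩

/-- The branch of `e` is a fork `R_{k,2}`. -/
def IsForkBranch (e : T.Dart) : Prop :=
  ∃ k, ∃ h : 3 ≤ k, HasShape e (Rtwo k) ⟨0, by omega⟩

lemma hasShape_pathGraph_iff (hk : 0 < k) :
    HasShape e (pathGraph k) ⟨0, hk⟩ ↔ IsPathBranch e ∧ order e = k := by
  refine ⟨fun he => ⟨⟨k, hk, he⟩, by simpa using he.order_eq⟩, ?_⟩
  rintro ⟨⟨m, hm, he⟩, hek⟩
  obtain rfl : m = k := by simpa [hek] using he.order_eq.symm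
  exact he

lemma hasShape_Rtwo_iff (hk : 3 ≤ k) :
    HasShape e (Rtwo k) ⟨0, by omega⟩ ↔ IsForkBranch e ∧ order e = k := by
  refine ⟨fun he => ⟨⟨k, hk, he⟩, by simpa using he.order_eq⟩, ?_⟩
  rintro ⟨⟨m, hm, he⟩, hek⟩
  obtain rfl : m = k := by simpa [hek] using he.order_eq.symm
  exact he

lemma IsForkBranch.three_le_order (he : IsForkBranch e) : 3 ≤ order e := by
  obtain ⟨k, hk, he⟩ := he
  exact ((hasShape_Rtwo_iff hk).1 he).2 ▸ hk

lemma IsPathBranch.exists_isOnlyChild (hT : T.IsTree) (he : IsPathBranch e) (hne : order e ≠ 1) :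
    ∃ f, IsOnlyChild e f ∧ IsPathBranch f := by
  obtain ⟨_ | _ | k, hk, he⟩ := he
  · omega
  · exact absurd (by simpa using he.order_eq) hne
  obtain ⟨f, hf, hshape⟩ := he.exists_isOnlyChild (r := ⟨0, k.succ_pos⟩) hT
    (pathGraphSucc (k + 1)) (by simp [pathGraphSucc]) fun w => by
      simp only [pathGraph_adj, Fin.ext_iff]
      change _ ↔ w.val = 0 + 1
      omega
  exact ⟨f, hf, _, _, hshape⟩

lemma IsForkBranch.exists_isOnlyChild (hT : T.IsTree) (he : IsForkBranch e) (hne : order e ≠ 3) :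
    ∃ f, IsOnlyChild e f ∧ IsForkBranch f := by
  obtain ⟨k, hk, he⟩ := he
  obtain rfl | ⟨k, rfl⟩ : k = 3 ∨ ∃ m, k = m + 4 :=
    hk.eq_or_lt'.imp_right fun h => Nat.exists_eq_add_of_le' h
  · exact absurd (by simpa using he.order_eq) hne
  obtain ⟨f, hf, hshape⟩ := he.exists_isOnlyChild (r := ⟨0, by omega⟩) hT
    (RtwoSucc (k := k + 3) (by omega)) (by simp [RtwoSucc]) fun w => by
      simp only [Rtwo_adj, ne_eq, Fin.ext_iff]
      change _ ↔ w.val = 0 + 1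
      omega
  exact ⟨f, hf, k + 3, by omega, hshape⟩

variable [Finite V]

lemma IsForkBranch.exists_two_leaves (hT : T.IsTree) (he : IsForkBranch e) (hthree : order e = 3) :
    ∃ f g, f ≠ g ∧ order f = 1 ∧ order g = 1 ∧ ∀ p, IsChild e p ↔ p = f ∨ p = g := by
  obtain ⟨φ, hφ, hφr⟩ := (hasShape_Rtwo_iff le_rfl).2 ⟨he, hthree⟩
  have hadj {i : Fin 3} : (Rtwo 3).Adj 0 i ↔ i = 1 ∨ i = 2 := by
    fin_cases i <;> simp [Rtwo_adj]
  let f : T.Dart := ⟨(e.snd, φ 1), hφr ▸ φ.map_adj_iff.2 (hadj.2 (.inl rfl))⟩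
  let g : T.Dart := ⟨(e.snd, φ 2), hφr ▸ φ.map_adj_iff.2 (hadj.2 (.inr rfl))⟩
  have hchild (p : T.Dart) : IsChild e p ↔ p = f ∨ p = g := by
    simp [isChild_iff_of_range_eq hT hφ hφr, hadj, Dart.ext_iff, Prod.ext_iff, f, g, eq_comm,
      and_or_left]
  have hne : f ≠ g := fun h =>
    absurd (φ.injective (congrArg (·.snd) h : φ 1 = φ 2)) (by decide)
  have hf : IsChild e f := (hchild f).2 (.inl rfl)
  have hg : IsChild e g := (hchild g).2 (.inr rfl)
  have hsub : branch f ∪ branch g ⊆ branch e \ {e.snd} := by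
    refine Set.subset_sdiff_singleton
      (Set.union_subset (hf.branch_subset hT) (hg.branch_subset hT)) ?_
    rintro (h | h)
    exacts [fst_notMem_branch hT.isAcyclic f h, fst_notMem_branch hT.isAcyclic g h]
  have hsum : order f + order g ≤ order e - 1 := by
    simpa only [order, Set.ncard_union_eq (hf.disjoint_branch hT hg hne),
      Set.ncard_sdiff_singleton_of_mem (snd_mem_branch e)] using Set.ncard_le_ncard hsub
  have := order_pos f
  have := order_pos g
  exact ⟨f, g, hne, by omega, by omega, hchild⟩

@[elab_as_elim]
lemma IsPathBranch.induction_on {motive : ∀ e : T.Dart, IsPathBranch e → Prop} (hT : T.IsTree)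
    (leaf : ∀ e (he : IsPathBranch e), order e = 1 → motive e he)
    (extend : ∀ e f (he : IsPathBranch e) (hf : IsPathBranch f), IsOnlyChild e f → motive f hf →
      motive e he) (he : IsPathBranch e) : motive e he := by
  induction h : order e using Nat.strong_induction_on generalizing e with | _ k ih
  by_cases hone : order e = 1
  · exact leaf e he hone
  · obtain ⟨f, hef, hf⟩ := he.exists_isOnlyChild hT hone
    exact extend e f he hf hef (ih _ (by have := hef.order_eq hT; omega) hf rfl)

@[elab_as_elim]
lemma IsForkBranch.induction_on {motive : ∀ e : T.Dart, IsForkBranch e → Prop} (hT : T.IsTree)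
    (cherry : ∀ e (he : IsForkBranch e), order e = 3 → motive e he)
    (extend : ∀ e f (he : IsForkBranch e) (hf : IsForkBranch f), IsOnlyChild e f → motive f hf →
      motive e he) (he : IsForkBranch e) : motive e he := by
  induction h : order e using Nat.strong_induction_on generalizing e with | _ k ih
  by_cases hthree : order e = 3
  · exact cherry e he hthree
  · obtain ⟨f, hef, hf⟩ := he.exists_isOnlyChild hT hthree
    exact extend e f he hf hef (ih _ (by have := hef.order_eq hT; omega) hf rfl)

lemma IsPathBranch.of_branch_subset (hT : T.IsTree) (he : IsPathBranch e)
    (hpe : branch p ⊆ branch e) : IsPathBranch p := by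
  induction e, he using IsPathBranch.induction_on hT with
  | leaf e he hone =>
    rwa [eq_of_branch_subset hT hpe (hone ▸ order_pos p)]
  | extend e f he _ hef ih =>
    obtain rfl | hpf := (hef.branch_subset_iff hT).1 hpe
    exacts [he, ih hpf]

lemma IsForkBranch.of_branch_subset (hT : T.IsTree) (he : IsForkBranch e)
    (hpe : branch p ⊆ branch e) (hp : order p ≠ 1) : IsForkBranch p := by
  induction e, he using IsForkBranch.induction_on hT with
  | cherry e he hthree =>
    obtain ⟨f, g, -, hf, hg, hchild⟩ := he.exists_two_leaves hT hthree
    by_contra hpf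
    obtain ⟨l, hl, hpl⟩ := exists_isChild_branch_subset hT hpe (by rintro rfl; exact hpf he)
    have hlone : order l = 1 := by
      obtain rfl | rfl := (hchild l).1 hl <;> assumption
    exact hp (le_antisymm (hlone ▸ order_le_of_subset hpl) (order_pos p))
  | extend e f he _ hef ih =>
    obtain rfl | hpf := (hef.branch_subset_iff hT).1 hpe
    exacts [he, ih hpf]

end PathsAndForks

section CountingSubBranches

variable {V : Type*} [Fintype V] {T : SimpleGraph V} {e f : T.Dart} {k : ℕ}

lemma subDarts_order (hT : T.IsTree) (e : T.Dart) : subDarts e (order e) = {e} := by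
  ext p
  rw [mem_subDarts, Finset.mem_singleton]
  refine ⟨fun h => eq_of_branch_subset hT h.2 h.1.ge, ?_⟩
  rintro rfl
  exact ⟨rfl, subset_rfl⟩

lemma IsOnlyChild.subDarts_eq (hT : T.IsTree) (hef : IsOnlyChild e f) (hk : k ≠ order e) :
    subDarts e k = subDarts f k := by
  ext p
  rw [mem_subDarts, mem_subDarts, hef.branch_subset_iff hT, and_or_left,
    or_iff_right]
  rintro ⟨hp, rfl⟩
  exact hk hp.symm

lemma IsOnlyChild.card_subDarts_order (hT : T.IsTree) (hef : IsOnlyChild e f) :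
    (subDarts e (order f)).card = 1 := by
  rw [hef.subDarts_eq hT (by have := hef.order_eq hT; omega), subDarts_order hT,
    Finset.card_singleton]

lemma IsPathBranch.card_subDarts_of_order_eq_succ (hT : T.IsTree) (he : IsPathBranch e)
    (hk : 0 < k) (hek : order e = k + 1) : (subDarts e k).card = 1 := by
  obtain ⟨f, hef, -⟩ := he.exists_isOnlyChild hT (by omega)
  obtain rfl : k = order f := Nat.succ.inj (hek.symm.trans (hef.order_eq hT))
  exact hef.card_subDarts_order hT

lemma IsForkBranch.card_subDarts_of_order_eq_succ (hT : T.IsTree) (he : IsForkBranch e)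
    (hk : 3 ≤ k) (hek : order e = k + 1) : (subDarts e k).card = 1 := by
  obtain ⟨f, hef, -⟩ := he.exists_isOnlyChild hT (by omega)
  obtain rfl : k = order f := Nat.succ.inj (hek.symm.trans (hef.order_eq hT))
  exact hef.card_subDarts_order hT

lemma IsPathBranch.card_subDarts_one (hT : T.IsTree) (he : IsPathBranch e) :
    (subDarts e 1).card = 1 := by
  induction e, he using IsPathBranch.induction_on hT with
  | leaf e _ hone => simpa [hone] using congrArg Finset.card (subDarts_order hT e)
  | extend e f _ _ hef ih =>
    have := order_pos f
    rwa [hef.subDarts_eq hT (by have := hef.order_eq hT; omega)]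

lemma IsForkBranch.card_subDarts_one (hT : T.IsTree) (he : IsForkBranch e) :
    (subDarts e 1).card = 2 := by
  induction e, he using IsForkBranch.induction_on hT with
  | cherry e he hthree =>
    obtain ⟨f, g, hne, hf, hg, hchild⟩ := he.exists_two_leaves hT hthree
    classical
    rw [Finset.card_eq_two]
    refine ⟨f, g, hne, Finset.ext fun p => ?_⟩
    rw [mem_subDarts, Finset.mem_insert, Finset.mem_singleton, ← hchild]
    refine ⟨fun ⟨hp, hpe⟩ => ?_, fun hp => ⟨?_, hp.branch_subset hT⟩⟩
    · obtain ⟨l, hl, hpl⟩ := exists_isChild_branch_subset hT hpe (by rintro rfl; omega)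
      have hlp : order l ≤ order p := by
        obtain rfl | rfl := (hchild l).1 hl <;> omega
      exact eq_of_branch_subset hT hpl hlp ▸ hl
    · obtain rfl | rfl := (hchild p).1 hp <;> assumption
  | extend e f _ hf hef ih =>
    have := hf.three_le_order
    rwa [hef.subDarts_eq hT (by have := hef.order_eq hT; omega)]

end CountingSubBranches

section Legs

variable {V : Type} {T : SimpleGraph V} {t : V} {p : T.Dart} {k : ℕ}

lemma isOneLegAt_iff_isPathBranch (hT : T.IsAcyclic) (e : T.Dart) :
    IsOneLegAt T e.fst e.snd ↔ IsPathBranch e :=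
  exists₂_congr fun _ _ => isRootedSubtree_iff_hasShape hT

lemma isTwoLegAt_iff_isForkBranch (hT : T.IsAcyclic) (e : T.Dart) :
    IsTwoLegAt T e.fst e.snd ↔ IsForkBranch e :=
  exists₂_congr fun _ _ => isRootedSubtree_iff_hasShape hT

lemma exists_dart_fst_eq_branch_subset_of_order_le [Finite V] (hT : T.IsTree)
    (hshort : ∀ u, T.Adj t u → 2 * legOrder T t u ≤ Nat.card V)
    (hp : 2 * order p < Nat.card V) : ∃ e : T.Dart, e.fst = t ∧ branch p ⊆ branch e := by
  refine exists_dart_branch_subset hT fun htp => ?_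
  have ht : t ∉ branch p.symm := by
    rw [branch_symm hT]
    exact fun h => h htp
  obtain ⟨e, rfl, hpe⟩ := exists_dart_branch_subset hT ht
  have hleg : 2 * order e ≤ Nat.card V := hshort e.snd e.adj
  have := order_le_of_subset hpe
  have := order_add_order_symm hT p
  omega

lemma isPathBranch_or_isForkBranch [Finite V] (hT : T.IsTree)
    (hlegs : ∀ u, T.Adj t u → IsOneLegAt T t u ∨ IsTwoLegAt T t u)
    (hshort : ∀ u, T.Adj t u → 2 * legOrder T t u ≤ Nat.card V)
    (hone : order p ≠ 1) (hp : 2 * order p < Nat.card V) : IsPathBranch p ∨ IsForkBranch p := by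
  obtain ⟨e, rfl, hpe⟩ := exists_dart_fst_eq_branch_subset_of_order_le hT hshort hp
  refine (hlegs e.snd e.adj).imp (fun he => ?_) fun he => ?_
  · exact ((isOneLegAt_iff_isPathBranch hT.isAcyclic e).1 he).of_branch_subset hT hpe
  · exact ((isTwoLegAt_iff_isForkBranch hT.isAcyclic e).1 he).of_branch_subset hT hpe hone

lemma IsPathBranch.not_isForkBranch [Finite V] (hT : T.IsTree) (hp : IsPathBranch p) :
    ¬ IsForkBranch p := by
  intro hp'
  have := Fintype.ofFinite V
  have := hp.card_subDarts_one hT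
  have := hp'.card_subDarts_one hT
  omega

variable [Fintype V]

open Classical in
lemma rho_pathGraph (hT : T.IsAcyclic) (hk : 0 < k) :
    rho T (pathGraph k) ⟨0, hk⟩ = {e ∈ dartsOfOrder T k | IsPathBranch e}.card := by
  rw [rho_eq_ncard_hasShape hT, ← Set.ncard_coe_finset]
  simp [hasShape_pathGraph_iff, and_comm]

open Classical in
lemma rho_Rtwo (hT : T.IsAcyclic) (hk : 3 ≤ k) :
    rho T (Rtwo k) ⟨0, by omega⟩ = {e ∈ dartsOfOrder T k | IsForkBranch e}.card := by
  rw [rho_eq_ncard_hasShape hT, ← Set.ncard_coe_finset]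
  simp [hasShape_Rtwo_iff hk, and_comm]

lemma sum_dartsOfOrder {M : Type*} [AddCommMonoid M] (hT : T.IsTree) (hk : 3 ≤ k)
    (hshape : ∀ p : T.Dart, order p = k → IsPathBranch p ∨ IsForkBranch p) {g : T.Dart → M}
    {a b : M} (ha : ∀ p, order p = k → IsPathBranch p → g p = a)
    (hb : ∀ p, order p = k → IsForkBranch p → g p = b) :
    ∑ p ∈ dartsOfOrder T k, g p =
      rho T (pathGraph k) ⟨0, by omega⟩ • a + rho T (Rtwo k) ⟨0, by omega⟩ • b := by
  classical
  have hfork : {p ∈ dartsOfOrder T k | ¬ IsPathBranch p} =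
      {p ∈ dartsOfOrder T k | IsForkBranch p} :=
    Finset.filter_congr fun p hp => ⟨(hshape p (mem_dartsOfOrder.1 hp)).resolve_left,
      fun h h' => h'.not_isForkBranch hT h⟩
  rw [← Finset.sum_filter_add_sum_filter_not _ IsPathBranch, hfork, rho_pathGraph hT.isAcyclic,
    rho_Rtwo hT.isAcyclic hk]
  congr 1
  · refine Finset.sum_eq_card_nsmul fun p hp => ?_
    exact ha p (mem_dartsOfOrder.1 (Finset.mem_filter.1 hp).1) (Finset.mem_filter.1 hp).2
  · refine Finset.sum_eq_card_nsmul fun p hp => ?_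
    exact hb p (mem_dartsOfOrder.1 (Finset.mem_filter.1 hp).1) (Finset.mem_filter.1 hp).2

lemma cCoeff_pair_eq_rho_add_rho (hT : T.IsTree) (hk : 3 ≤ k) (hkV : 2 * k < Nat.card V)
    (hshape : ∀ p : T.Dart, order p = k → IsPathBranch p ∨ IsForkBranch p) :
    cCoeff T {Nat.card V - k, k} =
      rho T (pathGraph k) ⟨0, by omega⟩ + rho T (Rtwo k) ⟨0, by omega⟩ := by
  rw [cCoeff_pair hT hkV, Finset.card_eq_sum_ones, sum_dartsOfOrder hT hk hshape (a := 1) (b := 1)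
    (fun _ _ _ => rfl) fun _ _ _ => rfl]
  simp only [smul_eq_mul, mul_one]

lemma sum_card_disjointDarts (hT : T.IsTree) (hk : 3 ≤ k) (hkV : 2 * k ≤ Nat.card V)
    (hshape : ∀ p : T.Dart, order p = k → IsPathBranch p ∨ IsForkBranch p) :
    ∑ q ∈ dartsOfOrder T k, ((disjointDarts q 1).card : ℤ) =
      ((dartsOfOrder T 1).card - 1) * rho T (pathGraph k) ⟨0, by omega⟩ +
        ((dartsOfOrder T 1).card - 2) * rho T (Rtwo k) ⟨0, by omega⟩ := by
  have hcard (q : T.Dart) (hq : order q = k) :=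
    card_disjointDarts_add_card_subDarts (e := q) (k := 1) hT (by omega) (by omega)
  rw [sum_dartsOfOrder hT hk hshape (a := ((dartsOfOrder T 1).card - 1 : ℤ))
    (b := ((dartsOfOrder T 1).card - 2 : ℤ))]
  · simp only [nsmul_eq_mul]
    ring
  · intro q hq hpath
    have := hcard q hq
    have := hpath.card_subDarts_one hT
    omega
  · intro q hq hfork
    have := hcard q hq
    have := hfork.card_subDarts_one hT
    omega

lemma sum_card_subDarts (hT : T.IsTree) (hk : 3 ≤ k)
    (hshape : ∀ p : T.Dart, order p = k + 1 → IsPathBranch p ∨ IsForkBranch p) :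
    ∑ q ∈ dartsOfOrder T (k + 1), ((subDarts q k).card + (subDarts q 1).card) =
      2 * rho T (pathGraph (k + 1)) ⟨0, by omega⟩ + 3 * rho T (Rtwo (k + 1)) ⟨0, by omega⟩ := by
  rw [sum_dartsOfOrder hT (by omega) hshape (a := 2) (b := 3)]
  · simp only [smul_eq_mul, mul_comm]
  · intro q hq hpath
    rw [hpath.card_subDarts_of_order_eq_succ hT (by omega) hq, hpath.card_subDarts_one hT]
  · intro q hq hfork
    rw [hfork.card_subDarts_of_order_eq_succ hT hk hq, hfork.card_subDarts_one hT]

lemma cCoeff_triple_eq_rho (hT : T.IsTree) (hk : 3 ≤ k) (hkV : 2 * (k + 1) < Nat.card V)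
    (hshape : ∀ p : T.Dart, order p = k ∨ order p = k + 1 → IsPathBranch p ∨ IsForkBranch p) :
    (cCoeff T {Nat.card V - (k + 1), k, 1} : ℤ) =
      ((cCoeff T {Nat.card V - 1, 1} : ℤ) - 1) * rho T (pathGraph k) ⟨0, by omega⟩ +
        ((cCoeff T {Nat.card V - 1, 1} : ℤ) - 2) * rho T (Rtwo k) ⟨0, by omega⟩ +
        2 * rho T (pathGraph (k + 1)) ⟨0, by omega⟩ +
        3 * rho T (Rtwo (k + 1)) ⟨0, by omega⟩ := by
  have hdisj := sum_card_disjointDarts hT hk (by omega) fun p hp => hshape p (.inl hp)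
  have hnested := sum_card_subDarts hT hk fun p hp => hshape p (.inr hp)
  rw [cCoeff_triple hT one_pos (by omega) hkV, cCoeff_pair hT (by omega),
    card_cutPairs (by omega) one_pos, hnested]
  push_cast
  linarith

end Legs

end TwoSpider

open TwoSpider in
theorem twoSpider_caseII_recursion_general {V : Type} [Fintype V] (T : SimpleGraph V) (t : V)
    (hT : T.IsTree) (hlegs : ∀ u, T.Adj t u → IsOneLegAt T t u ∨ IsTwoLegAt T t u)
    (hshort : ∀ u, T.Adj t u → 2 * legOrder T t u ≤ Nat.card V) (n : ℕ) (hn : 4 ≤ n)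
    (hnV : 2 * n < Nat.card V) :
    cCoeff T {Nat.card V - n, n} =
        rho T (pathGraph n) ⟨0, by omega⟩ + rho T (Rtwo n) ⟨0, by omega⟩ ∧
      (cCoeff T {Nat.card V - n, n - 1, 1} : ℤ) =
        ((cCoeff T {Nat.card V - 1, 1} : ℤ) - 1) *
            (rho T (pathGraph (n - 1)) ⟨0, by omega⟩ : ℤ) +
          ((cCoeff T {Nat.card V - 1, 1} : ℤ) - 2) * (rho T (Rtwo (n - 1)) ⟨0, by omega⟩ : ℤ) +
          2 * (rho T (pathGraph n) ⟨0, by omega⟩ : ℤ) +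
          3 * (rho T (Rtwo n) ⟨0, by omega⟩ : ℤ) := by
  have hshape (p : T.Dart) (hone : order p ≠ 1) (hp : order p ≤ n) :=
    isPathBranch_or_isForkBranch hT hlegs hshort hone (by omega)
  obtain _ | k := n
  · omega
  · exact ⟨cCoeff_pair_eq_rho_add_rho hT (by omega) hnV fun p hp => hshape p (by omega) hp.le,
      cCoeff_triple_eq_rho hT (by omega) hnV fun p hp => hshape p (by omega) (by omega)⟩

/-- Let `T` be a 2-spider of order `d` (with torso `t`) all of whose legs have order at
most `d/2`, and which does not have exactly three legs with two of them of order one.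
Then for `4 ≤ n < d/2`: `c_n(T) = ρ_{n,1}(T) + ρ_{n,2}(T)` and
`c_{n-1,1}(T) = (c₁-1)·ρ_{n-1,1}(T) + (c₁-2)·ρ_{n-1,2}(T) + 2·ρ_{n,1}(T) + 3·ρ_{n,2}(T)`. -/
theorem twoSpider_caseII_recursion {V : Type} [Fintype V] (T : SimpleGraph V) (t : V)
    (d : ℕ) (hd : Fintype.card V = d)
    (hsp : IsTwoSpiderWithTorso T t)
    (hshort : ∀ u : V, T.Adj t u → 2 * legOrder T t u ≤ d)
    (hnot : ¬ ThreeLegsTwoSingletons T t) :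
    ∀ n : ℕ, ∀ hn : 4 ≤ n, 2 * n < d →
      (cCoeff T {d - n, n} =
        rho T (SimpleGraph.pathGraph n) ⟨0, by omega⟩ + rho T (Rtwo n) ⟨0, by omega⟩) ∧
      ((cCoeff T {d - n, n - 1, 1} : ℤ) =
        ((cCoeff T {d - 1, 1} : ℤ) - 1) *
            (rho T (SimpleGraph.pathGraph (n - 1)) ⟨0, by omega⟩ : ℤ) +
        ((cCoeff T {d - 1, 1} : ℤ) - 2) * (rho T (Rtwo (n - 1)) ⟨0, by omega⟩ : ℤ) +
        2 * (rho T (SimpleGraph.pathGraph n) ⟨0, by omega⟩ : ℤ) +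
        3 * (rho T (Rtwo n) ⟨0, by omega⟩ : ℤ)) := by
  subst hd
  rw [← Nat.card_eq_fintype_card] at hshort ⊢
  exact twoSpider_caseII_recursion_general T t hsp.1 hsp.2.2 hshort
end

section
/- Let T be a 2-spider of order d ≥ 9 such that it is not the case that T has exactly three legs with two of them of order one, and suppose T has a leg of order k with k > d/2. Then 3 ≤ d−k−1 < d/2 − 1, every other leg of T has order strictly less than d−k−1 (in particular the leg of order k is unique), c_{d−k−1}(T) = 1, and c_{d−k}(T) = 2. -/
open SimpleGraph

/-!
A spanning subgraph of a tree has exactly two components when it misses exactly one edge, so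
`c_m(T)` counts the edges whose deletion cuts off `m` vertices. Root `T` at the torso `t` and
orient every edge away from `t`: such an edge has `m` or `d - m` vertices in the branch beyond it,
and that branch lies inside a single leg. Hence only the long leg, of order `k`, contributes
branches of order at least `d - k - 1`, as every other leg is smaller than that. A branch of order
at least three inside a 1-leg or a 2-leg is all of that leg from some vertex of its path outward,
so the long leg contains exactly one branch of each order `3, …, k` and none of order `k + 1`.
Thus `c_{d-k-1}` counts one branch, of order `d - k - 1`, whereas `c_{d-k}` counts two, of orders
`d - k` and `k`.
-/

section ComponentCount

variable {V : Type*}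

theorem not_reachable_deleteEdges_of_adj {G : SimpleGraph V} (hG : G.IsAcyclic) {a b : V}
    (hab : G.Adj a b) : ¬ (G.deleteEdges {s(a, b)}).Reachable a b :=
  isBridge_iff.1 (isAcyclic_iff_forall_adj_isBridge.1 hG hab)

theorem card_connectedComponent_lt_of_lt [Finite V] {G H : SimpleGraph V} (hG : G.IsAcyclic)
    (hlt : H < G) : Nat.card G.ConnectedComponent < Nat.card H.ConnectedComponent := by
  obtain ⟨a, b, hab, hab'⟩ : ∃ a b, G.Adj a b ∧ ¬ H.Adj a b := by
    by_contra! h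
    exact hlt.not_ge fun a b ↦ h a b
  refine (ConnectedComponent.card_le_card_of_le hlt.le).lt_of_ne fun hcard ↦ ?_
  have hbij := (Nat.bijective_iff_surjective_and_card _).2
    ⟨ConnectedComponent.surjective_map_ofLE hlt.le, hcard.symm⟩
  have hreach : H.Reachable a b :=
    ConnectedComponent.exact (hbij.injective (ConnectedComponent.sound hab.reachable))
  have hle : H ≤ G.deleteEdges {s(a, b)} := fun x y hxy ↦
    deleteEdges_adj.2 ⟨hlt.le hxy, fun he ↦ hab' ((adj_congr_of_sym2 H he).1 hxy)⟩
  exact not_reachable_deleteEdges_of_adj hG hab (hreach.mono hle)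

theorem exists_eq_deleteEdges_of_card_connectedComponent_eq_two [Finite V] {T H : SimpleGraph V}
    (hT : T.IsTree) (hle : H ≤ T) (hcard : Nat.card H.ConnectedComponent = 2) :
    ∃ e ∈ T.edgeSet, H = T.deleteEdges {e} := by
  have hone : Nat.card T.ConnectedComponent = 1 :=
    Nat.card_eq_one_iff_unique.2 ⟨hT.connected.preconnected.subsingleton_connectedComponent,
      hT.connected.nonempty.map T.connectedComponentMk⟩
  have hlt : H < T := hle.lt_of_ne fun h ↦ by rw [h] at hcard; lia
  obtain ⟨e, he, heH⟩ := Set.exists_of_ssubset (edgeSet_ssubset_edgeSet.2 hlt)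
  have hle' : H ≤ T.deleteEdges {e} := edgeSet_subset_edgeSet.1 fun x hx ↦ by
    rw [edgeSet_deleteEdges]
    exact ⟨edgeSet_subset_edgeSet.2 hle hx, fun h ↦ heH (h ▸ hx)⟩
  have hlt' : T.deleteEdges {e} < T := edgeSet_ssubset_edgeSet.1 <| by
    rw [edgeSet_deleteEdges]
    exact Set.sdiff_singleton_ssubset.2 he
  refine ⟨e, he, hle'.eq_of_not_lt fun hlt'' ↦ ?_⟩
  have h₁ := card_connectedComponent_lt_of_lt hT.isAcyclic hlt'
  have h₂ := card_connectedComponent_lt_of_lt (hT.isAcyclic.anti hlt'.le) hlt''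
  lia

end ComponentCount

section Branch

variable {V : Type*} {G T : SimpleGraph V} {t u a b a' b' x y : V}

/-- The branch at `b` away from `a`: the vertices on the side of `b` once the edge `ab` is
deleted. For a torso `t` and a neighbour `u` of it, `branch T t u` is the leg at `u`. -/
def branch (G : SimpleGraph V) (a b : V) : Set V :=
  ((G.deleteEdges {s(a, b)}).connectedComponentMk b).supp

theorem mem_branch_self : b ∈ branch G a b := rfl

theorem eq_of_adj_of_mem_branch_of_notMem (hxy : G.Adj x y) (hx : x ∈ branch G a b)
    (hy : y ∉ branch G a b) : s(x, y) = s(a, b) := by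
  by_contra he
  exact hy (ConnectedComponent.mem_supp_of_adj_mem_supp _ hx (deleteEdges_adj.2 ⟨hxy, he⟩))

theorem exists_adj_of_not_branch_subset {S : Set V} (hx : x ∈ branch G a b) (hxS : x ∈ S)
    (hS : ¬ branch G a b ⊆ S) :
    ∃ y ∈ branch G a b, ∃ z ∈ branch G a b, y ∈ S ∧ z ∉ S ∧ G.Adj y z := by
  obtain ⟨w, hw, hwS⟩ := Set.not_subset.1 hS
  obtain ⟨p⟩ := ConnectedComponent.reachable_of_mem_supp _ hx hw
  obtain ⟨d, -, ⟨hd, hdS⟩, hd'⟩ :=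
    p.exists_boundary_dart (branch G a b ∩ S) ⟨hx, hxS⟩ fun h ↦ hwS h.2
  have hsnd := ConnectedComponent.mem_supp_of_adj_mem_supp _ hd d.adj
  exact ⟨d.fst, hd, d.snd, hsnd, hdS, fun h ↦ hd' ⟨hsnd, h⟩, (deleteEdges_adj.1 d.adj).1⟩

theorem branch_subset_branch (h : ¬ Disjoint (branch G a b) (branch G a' b'))
    (hab : ¬ (a' ∈ branch G a b ∧ b' ∈ branch G a b)) : branch G a b ⊆ branch G a' b' := by
  obtain ⟨x, hx, hx'⟩ := Set.not_disjoint_iff.1 h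
  by_contra hsub
  obtain ⟨y, hy, z, hz, hyS, hzS, hyz⟩ := exists_adj_of_not_branch_subset hx hx' hsub
  have := eq_of_adj_of_mem_branch_of_notMem hyz hyS hzS
  grind

theorem notMem_branch_of_adj (hT : T.IsAcyclic) (hab : T.Adj a b) : a ∉ branch T a b :=
  fun h ↦ not_reachable_deleteEdges_of_adj hT hab (ConnectedComponent.exact h)

theorem eq_and_eq_of_adj_of_mem_branch_of_notMem (hT : T.IsAcyclic) (hab : T.Adj a b)
    (hxy : T.Adj x y) (hx : x ∈ branch T a b) (hy : y ∉ branch T a b) : x = b ∧ y = a := by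
  have := eq_of_adj_of_mem_branch_of_notMem hxy hx hy
  have := notMem_branch_of_adj hT hab
  grind

theorem compl_branch (hT : T.IsTree) (hab : T.Adj a b) : (branch T a b)ᶜ = branch T b a := by
  refine Set.Subset.antisymm (fun x hx ↦ ?_) fun x hx hx' ↦ ?_
  · by_contra hx'
    obtain ⟨p⟩ := hT.connected.preconnected b x
    obtain ⟨d, -, hd, hd'⟩ := p.exists_boundary_dart (branch T a b ∪ branch T b a)
      (Or.inl mem_branch_self) fun h ↦ h.elim hx hx'
    have ha : a ∈ branch T b a := mem_branch_self
    have hb : b ∈ branch T a b := mem_branch_self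
    rcases hd with hd | hd
    · have := eq_of_adj_of_mem_branch_of_notMem d.adj hd fun h ↦ hd' (Or.inl h)
      grind
    · have := eq_of_adj_of_mem_branch_of_notMem d.adj hd fun h ↦ hd' (Or.inr h)
      grind
  · exact notMem_branch_of_adj hT.isAcyclic hab.symm <|
      branch_subset_branch (Set.not_disjoint_iff.2 ⟨x, hx', hx⟩)
        (fun h ↦ notMem_branch_of_adj hT.isAcyclic hab h.2) mem_branch_self

theorem mem_branch_swap (hT : T.IsTree) (hab : T.Adj a b) :
    x ∈ branch T b a ↔ x ∉ branch T a b := by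
  rw [← compl_branch hT hab, Set.mem_compl_iff]

theorem branch_eq_of_unique_exit (hT : T.IsTree) (hab : T.Adj a b) {S : Set V} (hb : b ∈ S)
    (ha : a ∉ S) (hexit : ∀ x ∈ S, ∀ y ∉ S, T.Adj x y → x = b ∧ y = a) : branch T a b = S := by
  refine Set.Subset.antisymm ?_ (Set.compl_subset_compl.1 ?_)
  · by_contra hsub
    obtain ⟨x, -, y, hy, hxS, hyS, hxy⟩ := exists_adj_of_not_branch_subset mem_branch_self hb hsub
    obtain ⟨-, rfl⟩ := hexit x hxS y hyS hxy
    exact notMem_branch_of_adj hT.isAcyclic hab hy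
  · rw [compl_branch hT hab]
    by_contra hsub
    obtain ⟨x, -, y, hy, hxS, hyS, hxy⟩ := exists_adj_of_not_branch_subset mem_branch_self ha hsub
    obtain ⟨rfl, -⟩ := hexit y (not_not.1 hyS) x hxS hxy.symm
    exact notMem_branch_of_adj hT.isAcyclic hab.symm hy

/-- The edges of a tree rooted at `t`, oriented away from the root. -/
def outwardPairs (T : SimpleGraph V) (t : V) : Set (V × V) :=
  {p | T.Adj p.1 p.2 ∧ t ∉ branch T p.1 p.2}

theorem mk_mem_outwardPairs (hT : T.IsAcyclic) (htu : T.Adj t u) : (t, u) ∈ outwardPairs T t :=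
  ⟨htu, notMem_branch_of_adj hT htu⟩

theorem bijOn_outwardPairs_edgeSet (hT : T.IsTree) (t : V) :
    Set.BijOn (fun p : V × V ↦ s(p.1, p.2)) (outwardPairs T t) T.edgeSet := by
  refine ⟨fun p hp ↦ hp.1, ?_, ?_⟩
  · rintro ⟨a, b⟩ ⟨hab, ht⟩ ⟨c, d⟩ ⟨-, ht'⟩ h
    rcases Sym2.eq_iff.1 h with ⟨rfl, rfl⟩ | ⟨rfl, rfl⟩
    · rfl
    · exact absurd ((mem_branch_swap hT hab).2 ht) ht'
  · intro e he
    induction e with | h a b =>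
    by_cases ht : t ∈ branch T a b
    · exact ⟨(b, a), ⟨he.symm, fun h ↦ (mem_branch_swap hT he).1 h ht⟩, Sym2.eq_swap⟩
    · exact ⟨(a, b), ⟨he, ht⟩, rfl⟩

theorem branch_nested (hT : T.IsTree) (h : (a, b) ∈ outwardPairs T t)
    (h' : (a', b') ∈ outwardPairs T t) (hmeet : ¬ Disjoint (branch T a b) (branch T a' b')) :
    branch T a b ⊆ branch T a' b' ∨ branch T a' b' ⊆ branch T a b := by
  by_cases hend : a' ∈ branch T a b ∧ b' ∈ branch T a b
  · right
    rw [← Set.compl_subset_compl, compl_branch hT h.1, compl_branch hT h'.1]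
    refine branch_subset_branch (Set.not_disjoint_iff.2
      ⟨t, (mem_branch_swap hT h.1).2 h.2, (mem_branch_swap hT h'.1).2 h'.2⟩) fun hend' ↦ ?_
    exact (mem_branch_swap hT h.1).1 hend'.2 hend.1
  · exact Or.inl (branch_subset_branch hmeet hend)

theorem eq_of_branch_eq (hT : T.IsAcyclic) (hab : T.Adj a b) (hab' : T.Adj a' b')
    (h : branch T a b = branch T a' b') : (a, b) = (a', b') := by
  obtain ⟨rfl, rfl⟩ := eq_and_eq_of_adj_of_mem_branch_of_notMem hT hab' hab.symm
    (h ▸ mem_branch_self) (h ▸ notMem_branch_of_adj hT hab)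
  rfl

theorem injOn_snd_outwardPairs (hT : T.IsTree) (t : V) :
    Set.InjOn Prod.snd (outwardPairs T t) := by
  rintro ⟨a, b⟩ h ⟨a', _⟩ h' rfl
  by_contra hne
  have ha' : a' ∈ branch T a b := by
    by_contra hmem
    have := eq_and_eq_of_adj_of_mem_branch_of_notMem hT.isAcyclic h.1 h'.1.symm mem_branch_self hmem
    exact hne (Prod.ext this.2.symm rfl)
  have ha : a ∈ branch T a' b := by
    by_contra hmem
    have := eq_and_eq_of_adj_of_mem_branch_of_notMem hT.isAcyclic h'.1 h.1.symm mem_branch_self hmem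
    exact hne (Prod.ext this.2 rfl)
  rcases branch_nested hT h h' (Set.not_disjoint_iff.2 ⟨b, mem_branch_self, mem_branch_self⟩) with
    hsub | hsub
  · exact notMem_branch_of_adj hT.isAcyclic h'.1 (hsub ha')
  · exact notMem_branch_of_adj hT.isAcyclic h.1 (hsub ha)

theorem exists_mem_leg (hG : G.Connected) (hx : x ≠ t) :
    ∃ w, G.Adj t w ∧ x ∈ branch G t w := by
  by_contra! hcon
  obtain ⟨p⟩ := hG.preconnected t x
  obtain ⟨d, -, hd, hd'⟩ := p.exists_boundary_dart {y | y = t ∨ ∃ w, G.Adj t w ∧ y ∈ branch G t w}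
    (Or.inl rfl) (by rintro (h | ⟨w, hw, h⟩); exacts [hx h, hcon w hw h])
  rcases hd with hd | ⟨w, hw, hd⟩
  · exact hd' (Or.inr ⟨d.snd, hd ▸ d.adj, mem_branch_self⟩)
  · have hedge := eq_of_adj_of_mem_branch_of_notMem d.adj hd fun h ↦ hd' (Or.inr ⟨w, hw, h⟩)
    have hsnd : d.snd = t ∨ d.snd = w := by grind
    rcases hsnd with hsnd | hsnd
    · exact hd' (Or.inl hsnd)
    · exact hd' (Or.inr ⟨w, hw, hsnd ▸ mem_branch_self⟩)

theorem eq_of_leg_subset_branch (hT : T.IsAcyclic) (htu : T.Adj t u)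
    (h : (a, b) ∈ outwardPairs T t) (hsub : branch T t u ⊆ branch T a b) : (a, b) = (t, u) := by
  obtain ⟨rfl, rfl⟩ := eq_and_eq_of_adj_of_mem_branch_of_notMem hT h.1 htu.symm
    (hsub mem_branch_self) h.2
  rfl

theorem exists_branch_subset_leg (hT : T.IsTree) (h : (a, b) ∈ outwardPairs T t) :
    ∃ w, T.Adj t w ∧ branch T a b ⊆ branch T t w := by
  have hbt : b ≠ t := by
    rintro rfl
    exact h.2 mem_branch_self
  obtain ⟨w, hw, hbw⟩ := exists_mem_leg hT.connected hbt
  refine ⟨w, hw, ?_⟩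
  rcases branch_nested hT h (mk_mem_outwardPairs hT.isAcyclic hw)
    (Set.not_disjoint_iff.2 ⟨b, mem_branch_self, hbw⟩) with hsub | hsub
  · exact hsub
  · obtain ⟨rfl, rfl⟩ := Prod.ext_iff.1 (eq_of_leg_subset_branch hT.isAcyclic hw h hsub)
    rfl

theorem pairwiseDisjoint_legs (hT : T.IsTree) (t : V) :
    (T.neighborSet t).PairwiseDisjoint (branch T t) := by
  intro u hu w hw huw
  by_contra hmeet
  have hu' := mk_mem_outwardPairs hT.isAcyclic hu
  have hw' := mk_mem_outwardPairs hT.isAcyclic hw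
  rcases branch_nested hT hu' hw' hmeet with hsub | hsub
  · exact huw (Prod.ext_iff.1 (eq_of_leg_subset_branch hT.isAcyclic hu hw' hsub)).2.symm
  · exact huw (Prod.ext_iff.1 (eq_of_leg_subset_branch hT.isAcyclic hw hu' hsub)).2

end Branch

section LegSizes

variable {V : Type*} {T : SimpleGraph V} {t u : V}

theorem ncard_branch_pos [Finite V] : 0 < (branch T t u).ncard :=
  (Set.ncard_pos).2 ⟨u, mem_branch_self⟩

variable [Fintype V]

theorem sum_ncard_legs_lt (hT : T.IsTree) {S : Finset V} (hS : ∀ w ∈ S, T.Adj t w) :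
    ∑ w ∈ S, (branch T t w).ncard < Fintype.card V := by
  classical
  have hdisj : (S : Set V).PairwiseDisjoint fun w ↦ (branch T t w).toFinset := fun u hu w hw huw ↦
    Set.disjoint_toFinset.2 (pairwiseDisjoint_legs hT t (hS u hu) (hS w hw) huw)
  have ht : t ∉ S.biUnion fun w ↦ (branch T t w).toFinset := by
    simp only [Finset.mem_biUnion, Set.mem_toFinset, not_exists, not_and]
    exact fun w hw ↦ notMem_branch_of_adj hT.isAcyclic (hS w hw)
  simp only [Set.ncard_eq_toFinset_card']
  rw [← Finset.card_biUnion hdisj]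
  exact Finset.card_lt_univ_of_notMem ht

theorem ncard_leg_add_ncard_leg_add_two_le (hT : T.IsTree) {w : V}
    (hdeg : 3 ≤ (T.neighborSet t).ncard) (hu : T.Adj t u) (hw : T.Adj t w) (hne : w ≠ u) :
    (branch T t u).ncard + (branch T t w).ncard + 2 ≤ Fintype.card V := by
  classical
  obtain ⟨x, hx, hxuw⟩ : ∃ x ∈ T.neighborSet t, x ∉ ({u, w} : Set V) :=
    Set.exists_mem_notMem_of_ncard_lt_ncard (by rw [Set.ncard_pair hne.symm]; lia)
  have hsum := sum_ncard_legs_lt hT (t := t) (S := {u, w, x}) (by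
    simp only [Finset.mem_insert, Finset.mem_singleton]
    rintro y (rfl | rfl | rfl) <;> assumption)
  rw [Finset.sum_insert (by grind), Finset.sum_pair (by grind)] at hsum
  have := ncard_branch_pos (T := T) (t := t) (u := x)
  lia

end LegSizes

theorem legOrder_add_four_le {V : Type} [Fintype V] {T : SimpleGraph V} {t u : V} (hT : T.IsTree)
    (hdeg : 3 ≤ (T.neighborSet t).ncard) (hnot : ¬ ThreeLegsTwoSingletons T t) (hu : T.Adj t u) :
    legOrder T t u + 4 ≤ Fintype.card V := by
  classical
  set S := (T.neighborFinset t).erase u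
  have huN : u ∈ T.neighborFinset t := (T.mem_neighborFinset t u).2 hu
  have hadj : ∀ w ∈ S, T.Adj t w := fun w hw ↦
    (T.mem_neighborFinset t w).1 (Finset.mem_of_mem_erase hw)
  have hcard : S.card + 1 = (T.neighborSet t).ncard := by
    rw [Finset.card_erase_add_one huN, Set.ncard_eq_toFinset_card', neighborFinset]
  have htotal : legOrder T t u + ∑ w ∈ S, legOrder T t w < Fintype.card V := by
    rw [Finset.add_sum_erase _ _ huN]
    exact sum_ncard_legs_lt hT fun w ↦ (T.mem_neighborFinset t w).1
  have hpos : ∀ w ∈ S, 1 ≤ legOrder T t w := fun w _ ↦ ncard_branch_pos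
  suffices 3 ≤ ∑ w ∈ S, legOrder T t w by lia
  by_cases htwo : S.card = 2
  · obtain ⟨w, x, hwx, hS⟩ := Finset.card_eq_two.1 htwo
    rw [hS] at hadj hpos ⊢
    simp only [Finset.forall_mem_insert, Finset.mem_singleton, forall_eq] at hadj hpos
    have hone : ¬ (legOrder T t w = 1 ∧ legOrder T t x = 1) := fun h ↦
      hnot ⟨by lia, w, x, hwx, hadj.1, hadj.2, h⟩
    rw [Finset.sum_pair hwx]
    lia
  · have := Finset.card_nsmul_le_sum S _ 1 hpos
    simp only [smul_eq_mul, mul_one] at this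
    lia

section BranchCount

variable {V : Type*} {T : SimpleGraph V} {t u : V} {m : ℕ}

/-- The number of edges of the tree `T` whose side away from the root `t` has `m` vertices. -/
noncomputable def branchCount (T : SimpleGraph V) (t : V) (m : ℕ) : ℕ :=
  {p ∈ outwardPairs T t | (branch T p.1 p.2).ncard = m}.ncard

theorem branchCount_eq_zero [Finite V] (hT : T.IsTree)
    (hlegs : ∀ w, T.Adj t w → (branch T t w).ncard < m) : branchCount T t m = 0 := by
  rw [branchCount, Set.ncard_eq_zero, Set.eq_empty_iff_forall_notMem]
  rintro ⟨a, b⟩ ⟨hab, rfl⟩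
  obtain ⟨w, hw, hsub⟩ := exists_branch_subset_leg hT hab
  exact (hlegs w hw).not_ge (Set.ncard_le_ncard hsub)

end BranchCount

section Stem

/-- Between `{0, …, i - 1}` and `{i, …, n - 1}` the only edge of `R` is the one joining `i - 1` to
`i`, as long as the upper part has at least three vertices. Both `R_{n,1}` and `R_{n,2}` have this
property. -/
def HasStem {n : ℕ} (R : SimpleGraph (Fin n)) : Prop :=
  ∀ ⦃i j l : Fin n⦄, i.val + 3 ≤ n → j < i → i ≤ l → (R.Adj j l ↔ j.val + 1 = i.val ∧ l = i)

theorem hasStem_pathGraph (n : ℕ) : HasStem (pathGraph n) := by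
  intro i j l _ hji hil
  rw [pathGraph_adj]
  lia

theorem hasStem_Rtwo (n : ℕ) : HasStem (Rtwo n) := by
  intro i j l hi hji hil
  rw [Rtwo, fromRel_adj]
  lia

variable {V : Type*} {T : SimpleGraph V} {t u : V} {n : ℕ} {R : SimpleGraph (Fin n)} {i : Fin n}

theorem exists_branch_eq_image_Ici (hT : T.IsTree) (hu : T.Adj t u) (hR : HasStem R)
    (f : R ↪g T) (hroot : ∀ i : Fin n, i.val = 0 → f i = u) (hrange : Set.range f = branch T t u)
    (hi : i.val + 3 ≤ n) :
    ∃ a, (a, f i) ∈ outwardPairs T t ∧ branch T a (f i) = f '' Set.Ici i := by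
  have himage : f '' Set.Ici i ⊆ branch T t u := hrange ▸ Set.image_subset_range _ _
  have ht : t ∉ f '' Set.Ici i := fun h ↦ notMem_branch_of_adj hT.isAcyclic hu (himage h)
  suffices ∃ a, T.Adj a (f i) ∧ branch T a (f i) = f '' Set.Ici i by
    obtain ⟨a, ha, hbranch⟩ := this
    exact ⟨a, ⟨ha, hbranch ▸ ht⟩, hbranch⟩
  by_cases hi0 : i.val = 0
  · have hIci : Set.Ici i = Set.univ := Set.eq_univ_of_forall fun j ↦ by
      simp only [Set.mem_Ici, Fin.le_def]
      lia
    exact ⟨t, by rwa [hroot i hi0], by rw [hroot i hi0, hIci, Set.image_univ, hrange]⟩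
  let j : Fin n := ⟨i - 1, by lia⟩
  have hji : j < i := Fin.lt_def.2 (by simp only [j]; lia)
  have hadj : T.Adj (f j) (f i) := f.map_adj_iff.2 ((hR hi hji le_rfl).2 ⟨by lia, rfl⟩)
  refine ⟨f j, hadj, branch_eq_of_unique_exit hT hadj ⟨i, Set.self_mem_Ici, rfl⟩ ?_ ?_⟩
  · rintro ⟨l, hl, hlj⟩
    exact hji.not_ge (f.injective hlj ▸ hl)
  · rintro _ ⟨l, hl, rfl⟩ y hy hly
    by_cases hyu : y ∈ branch T t u
    · obtain ⟨r, rfl⟩ := hrange ▸ hyu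
      have hri : r < i := lt_of_not_ge fun h ↦ hy ⟨r, h, rfl⟩
      obtain ⟨hr, rfl⟩ := (hR hi hri hl).1 (f.map_adj_iff.1 hly.symm)
      have hrj : r.val = l.val - 1 := by lia
      exact ⟨rfl, congrArg f (Fin.ext hrj)⟩
    · have hlu := (eq_and_eq_of_adj_of_mem_branch_of_notMem hT.isAcyclic hu hly
        (himage ⟨l, hl, rfl⟩) hyu).1
      have hl0 := Fin.val_eq_of_eq (f.injective (hlu.trans (hroot ⟨0, by lia⟩ rfl).symm))
      have hil : i.val ≤ l.val := hl
      lia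

theorem ncard_image_Ici (f : Fin n ↪ V) (i : Fin n) : (f '' Set.Ici i).ncard = n - i := by
  rw [Set.ncard_image_of_injective _ f.injective, ← Finset.coe_Ici, Set.ncard_coe_finset,
    Fin.card_Ici]

theorem existsUnique_branch_subset_leg [Finite V] (hT : T.IsTree) (hu : T.Adj t u) (hR : HasStem R)
    (f : R ↪g T) (hroot : ∀ i : Fin n, i.val = 0 → f i = u) (hrange : Set.range f = branch T t u)
    {m : ℕ} (hm : 3 ≤ m) (hmn : m ≤ n) :
    ∃! p, p ∈ outwardPairs T t ∧ branch T p.1 p.2 ⊆ branch T t u ∧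
      (branch T p.1 p.2).ncard = m := by
  let i : Fin n := ⟨n - m, by lia⟩
  have hi : i.val + 3 ≤ n := by simp only [i]; lia
  have hcard (j : Fin n) : (f '' Set.Ici j).ncard = n - j := ncard_image_Ici f.toEmbedding j
  obtain ⟨a, ha, hbranch⟩ := exists_branch_eq_image_Ici hT hu hR f hroot hrange hi
  have hncard : (branch T a (f i)).ncard = m := by rw [hbranch, hcard]; simp only [i]; lia
  refine ⟨(a, f i), ⟨ha, ?_, hncard⟩, ?_⟩
  · rw [hbranch, ← hrange]
    exact Set.image_subset_range _ _
  rintro ⟨c, b⟩ ⟨hc, hsub, hcm⟩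
  obtain ⟨j, rfl⟩ : b ∈ Set.range f := hrange ▸ hsub mem_branch_self
  rcases le_or_gt i j with hij | hji
  · have hmeet : ¬ Disjoint (branch T c (f j)) (branch T a (f i)) :=
      Set.not_disjoint_iff.2 ⟨f j, mem_branch_self, hbranch ▸ ⟨j, hij, rfl⟩⟩
    refine eq_of_branch_eq hT.isAcyclic hc.1 ha.1 ?_
    rcases branch_nested hT hc ha hmeet with h | h
    · exact Set.eq_of_subset_of_ncard_le h (by lia)
    · exact (Set.eq_of_subset_of_ncard_le h (by lia)).symm
  · have hj : j.val < n - m := hji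
    obtain ⟨a', ha', hbranch'⟩ := exists_branch_eq_image_Ici hT hu hR f hroot hrange
      (i := j) (by lia)
    obtain ⟨rfl, -⟩ := Prod.ext_iff.1 (injOn_snd_outwardPairs hT t hc ha' rfl)
    rw [hbranch', hcard] at hcm
    lia

end Stem

section Legs

variable {V : Type} {T : SimpleGraph V} {t u : V}

theorem exists_embedding_range_eq_branch {n : ℕ} {hn : 0 < n} {R : SimpleGraph (Fin n)}
    (hT : T.IsAcyclic) (h : IsRootedSubtree T s(t, u) u R ⟨0, hn⟩) :
    ∃ f : R ↪g T, (∀ i : Fin n, i.val = 0 → f i = u) ∧ Set.range f = branch T t u := by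
  obtain ⟨htu, -, φ, hφ⟩ := h
  have hne (i : Fin n) : (φ i : V) ≠ t := fun hi ↦
    notMem_branch_of_adj hT htu (hi.subst (motive := (· ∈ branch T t u)) (φ i).2)
  refine ⟨⟨φ.toEquiv.toEmbedding.trans (Function.Embedding.subtype _), fun {i j} ↦ ?_⟩, ?_, ?_⟩
  · change T.Adj (φ i) (φ j) ↔ R.Adj i j
    have hedge : s((φ i : V), (φ j : V)) ≠ s(t, u) := fun h ↦ by
      rcases Sym2.eq_iff.1 h with ⟨hi, -⟩ | ⟨-, hj⟩
      exacts [hne i hi, hne j hj]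
    rw [← φ.map_adj_iff, induce_adj, deleteEdges_adj]
    exact (and_iff_left hedge).symm
  · rintro ⟨i, hi⟩ rfl
    exact hφ
  · change Set.range (Subtype.val ∘ φ) = _
    rw [φ.surjective.range_comp, Subtype.range_coe]
    rfl

theorem adj_of_isOneLegAt_or_isTwoLegAt (h : IsOneLegAt T t u ∨ IsTwoLegAt T t u) : T.Adj t u := by
  rcases h with ⟨_, _, htu, _⟩ | ⟨_, _, htu, _⟩ <;> exact htu

theorem exists_stem_embedding (hT : T.IsAcyclic) (h : IsOneLegAt T t u ∨ IsTwoLegAt T t u) :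
    ∃ n, ∃ R : SimpleGraph (Fin n), HasStem R ∧ ∃ f : R ↪g T,
      (∀ i : Fin n, i.val = 0 → f i = u) ∧ Set.range f = branch T t u := by
  rcases h with ⟨n, hn, h⟩ | ⟨n, hn, h⟩
  · exact ⟨n, pathGraph n, hasStem_pathGraph n, exists_embedding_range_eq_branch hT h⟩
  · exact ⟨n, Rtwo n, hasStem_Rtwo n, exists_embedding_range_eq_branch hT h⟩

theorem branchCount_eq_one [Finite V] (hT : T.IsTree) (hleg : IsOneLegAt T t u ∨ IsTwoLegAt T t u)
    {m : ℕ} (hother : ∀ w, T.Adj t w → w ≠ u → legOrder T t w < m) (hm : 3 ≤ m)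
    (hmu : m ≤ legOrder T t u) : branchCount T t m = 1 := by
  have hu := adj_of_isOneLegAt_or_isTwoLegAt hleg
  obtain ⟨n, R, hR, f, hroot, hrange⟩ := exists_stem_embedding hT.isAcyclic hleg
  have hn : legOrder T t u = n := by
    change (branch T t u).ncard = n
    rw [← hrange, Set.ncard_range_of_injective f.injective, Nat.card_fin]
  obtain ⟨p, ⟨hp, -, hpm⟩, hunique⟩ :=
    existsUnique_branch_subset_leg hT hu hR f hroot hrange hm (hmu.trans_eq hn)
  refine Set.ncard_eq_one.2 ⟨p, Set.eq_singleton_iff_unique_mem.2 ⟨⟨hp, hpm⟩, ?_⟩⟩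
  rintro q ⟨hq, hqm⟩
  obtain ⟨w, hw, hsub⟩ := exists_branch_subset_leg hT hq
  obtain rfl : w = u := by
    by_contra hwu
    exact (hother w hw hwu).not_ge (hqm ▸ Set.ncard_le_ncard hsub)
  exact hunique q ⟨hq, hsub, hqm⟩

end Legs

section Coefficients

variable {V : Type} [Fintype V] {T : SimpleGraph V}

theorem card_compSizes (H : SimpleGraph V) :
    Multiset.card (compSizes H) = Nat.card H.ConnectedComponent := by
  classical
  have himage : Finset.univ.image H.connectedComponentMk = Finset.univ :=
    Finset.image_univ_of_surjective Quot.mk_surjective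
  rw [compSizes, Multiset.card_map, Finset.card_val, himage, Finset.card_univ,
    Nat.card_eq_fintype_card]

theorem compSizes_deleteEdges (hT : T.IsTree) {a b : V} (hab : T.Adj a b) :
    compSizes (T.deleteEdges {s(a, b)}) = {(branch T a b).ncard, (branch T b a).ncard} := by
  classical
  set G := T.deleteEdges {s(a, b)}
  have hbranch : branch T b a = (G.connectedComponentMk a).supp := by rw [branch, Sym2.eq_swap]
  have hne : G.connectedComponentMk b ≠ G.connectedComponentMk a := fun h ↦
    notMem_branch_of_adj hT.isAcyclic hab h.symm
  have himage : Finset.univ.image G.connectedComponentMk =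
      {G.connectedComponentMk b, G.connectedComponentMk a} := by
    ext c
    induction c using ConnectedComponent.ind with | h x =>
    have hx : x ∈ branch T a b ∨ x ∈ branch T b a := by
      rw [mem_branch_swap hT hab]
      exact em _
    rw [hbranch] at hx
    simp only [Finset.mem_image, Finset.mem_univ, true_and, Finset.mem_insert,
      Finset.mem_singleton]
    exact iff_of_true ⟨x, rfl⟩ hx
  rw [compSizes, himage, Finset.insert_val_of_notMem (by simpa using hne), hbranch,
    Finset.singleton_val, Multiset.map_cons, Multiset.map_singleton]
  rfl

theorem cCoeff_pair (hT : T.IsTree) (x y : ℕ) :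
    cCoeff T {x, y} = {e ∈ T.edgeSet | compSizes (T.deleteEdges {e}) = {x, y}}.ncard := by
  have hdelete (e : Sym2 V) : fromEdgeSet (T.edgeSet \ {e}) = T.deleteEdges {e} := by
    rw [← edgeSet_deleteEdges, fromEdgeSet_edgeSet]
  refine (Set.ncard_congr (fun e _ ↦ T.edgeSet \ {e}) ?_ ?_ ?_).symm
  · rintro e ⟨-, he⟩
    exact ⟨Set.sdiff_subset, by rwa [hdelete]⟩
  · rintro e e' ⟨he, -⟩ - h
    by_contra hne
    exact (h.superset ⟨he, hne⟩).2 rfl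
  · rintro F ⟨hF, hsizes⟩
    obtain ⟨e, he, hFe⟩ := exists_eq_deleteEdges_of_card_connectedComponent_eq_two hT
      ((fromEdgeSet_mono hF).trans_eq (fromEdgeSet_edgeSet T))
      (by rw [← card_compSizes, hsizes, Multiset.card_pair])
    refine ⟨e, ⟨he, hFe ▸ hsizes⟩, ?_⟩
    have hdiag : Disjoint F Sym2.diagSet :=
      Set.subset_compl_iff_disjoint_right.1 (hF.trans (edgeSet_subset_compl_diagSet T))
    rw [← edgeSet_deleteEdges, ← hFe, edgeSet_fromEdgeSet, hdiag.sdiff_eq_left]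

theorem pair_eq_pair_iff_of_add_eq {a b x y : ℕ} (h : a + b = x + y) :
    ({a, b} : Multiset ℕ) = {x, y} ↔ a = x ∨ a = y := by
  refine ⟨fun hab ↦ ?_, ?_⟩
  · have ha : a ∈ ({x, y} : Multiset ℕ) := hab ▸ Multiset.mem_cons_self a {b}
    simpa using ha
  · rintro (rfl | rfl)
    · rw [Nat.add_left_cancel h]
    · rw [Nat.add_left_cancel (h.trans (add_comm x a)), Multiset.pair_comm]

theorem cCoeff_eq_branchCount_add (hT : T.IsTree) (t : V) {m : ℕ} (hm : 2 * m < Fintype.card V) :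
    cCoeff T {Fintype.card V - m, m} =
      branchCount T t (Fintype.card V - m) + branchCount T t m := by
  have hbij : Set.BijOn (fun p : V × V ↦ s(p.1, p.2))
      {p ∈ outwardPairs T t | (branch T p.1 p.2).ncard = Fintype.card V - m ∨
        (branch T p.1 p.2).ncard = m}
      {e ∈ T.edgeSet | compSizes (T.deleteEdges {e}) = {Fintype.card V - m, m}} := by
    convert (bijOn_outwardPairs_edgeSet hT t).subset_right (Set.sep_subset _ _) using 1
    ext ⟨a, b⟩
    refine and_congr_right fun ⟨hab, _⟩ ↦ ?_
    have hcompl : (branch T a b).ncard + (branch T b a).ncard = Fintype.card V := by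
      rw [← compl_branch hT hab, Set.ncard_add_ncard_compl, Nat.card_eq_fintype_card]
    have hsizes := compSizes_deleteEdges hT hab
    rw [← pair_eq_pair_iff_of_add_eq (b := (branch T b a).ncard) (by lia), ← hsizes]
    exact (and_iff_right hab).symm
  rw [cCoeff_pair hT, ← hbij.ncard_eq, Set.sep_or, Set.ncard_union_eq]
  · rfl
  · exact Set.disjoint_left.2 fun p ⟨_, hp⟩ ⟨_, hp'⟩ ↦ by lia

end Coefficients

theorem twoSpider_longLeg_general {V : Type} [Fintype V] (T : SimpleGraph V) (t : V)
    (d k : ℕ) (hd : Fintype.card V = d) (hT : T.IsTree) (hdeg : 3 ≤ (T.neighborSet t).ncard)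
    (hnot : ¬ ThreeLegsTwoSingletons T t)
    (u : V) (hleg : IsOneLegAt T t u ∨ IsTwoLegAt T t u) (hk : legOrder T t u = k)
    (hlong : d < 2 * k) :
    3 ≤ d - k - 1 ∧ 2 * (d - k - 1) + 2 < d ∧
    (∀ u' : V, T.Adj t u' → u' ≠ u → legOrder T t u' < d - k - 1) ∧
    cCoeff T {d - (d - k - 1), d - k - 1} = 1 ∧
    cCoeff T {d - (d - k), d - k} = 2 := by
  subst hd hk
  have hu := adj_of_isOneLegAt_or_isTwoLegAt hleg
  have hfour := legOrder_add_four_le hT hdeg hnot hu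
  have hother : ∀ w, T.Adj t w → w ≠ u →
      legOrder T t w < Fintype.card V - legOrder T t u - 1 := fun w hw hwu ↦ by
    have : legOrder T t u + legOrder T t w + 2 ≤ Fintype.card V :=
      ncard_leg_add_ncard_leg_add_two_le hT hdeg hu hw hwu
    lia
  have hone : ∀ m, Fintype.card V - legOrder T t u - 1 ≤ m → m ≤ legOrder T t u →
      branchCount T t m = 1 := fun m hm ↦
    branchCount_eq_one hT hleg (fun w hw hwu ↦ (hother w hw hwu).trans_le hm) (by lia)
  have hzero : branchCount T t (Fintype.card V - (Fintype.card V - legOrder T t u - 1)) = 0 :=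
    branchCount_eq_zero hT fun w hw ↦ by
      change legOrder T t w < _
      rcases eq_or_ne w u with rfl | hwu
      · lia
      · have := hother w hw hwu
        lia
  refine ⟨by lia, by lia, hother, ?_, ?_⟩
  · rw [cCoeff_eq_branchCount_add hT t (by lia), hzero, hone _ le_rfl (by lia)]
  · rw [cCoeff_eq_branchCount_add hT t (by lia), hone _ (by lia) (by lia), hone _ (by lia) (by lia)]

/-- Let `T` be a 2-spider of order `d ≥ 9` (with torso `t`) which does not have exactly
three legs with two of them of order one, and suppose `T` has a leg of order `k > d/2`.
Then `3 ≤ d - k - 1 < d/2 - 1`, every other leg has order strictly less than `d - k - 1`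
(in particular the leg of order `k` is unique), `c_{d-k-1}(T) = 1` and `c_{d-k}(T) = 2`. -/
theorem twoSpider_longLeg {V : Type} [Fintype V] (T : SimpleGraph V) (t : V)
    (d k : ℕ) (hd : Fintype.card V = d) (hd9 : 9 ≤ d)
    (hsp : IsTwoSpiderWithTorso T t)
    (hnot : ¬ ThreeLegsTwoSingletons T t)
    (u : V) (hu : T.Adj t u) (hk : legOrder T t u = k) (hlong : d < 2 * k) :
    3 ≤ d - k - 1 ∧ 2 * (d - k - 1) + 2 < d ∧
    (∀ u' : V, T.Adj t u' → u' ≠ u → legOrder T t u' < d - k - 1) ∧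
    cCoeff T {d - (d - k - 1), d - k - 1} = 1 ∧
    cCoeff T {d - (d - k), d - k} = 2 :=
  twoSpider_longLeg_general T t d k hd hsp.1 hsp.2.1 hnot u (hsp.2.2 u hu) hk hlong
end

section
/- If T₁ and T₂ are trees of the same order d with d ≤ 7 such that c_λ(T₁) = c_λ(T₂) for every partition λ of d (equivalently, such that T₁ and T₂ have equal chromatic symmetric functions), then T₁ and T₂ are isomorphic as graphs. -/
open SimpleGraph

/-!
A spanning subgraph of two trees joined by an edge between their roots is a pair of spanning
subgraphs, with or without the joining edge. The component orders therefore obey a product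
recursion, as long as the order of the component of the root is kept apart from the others, and
`cCoeff` can be computed from any encoding of a tree by repeated joining of rooted trees. Every
finite tree has such an encoding. Those of order at most seven reduce to 25 normal forms under
reordering of branches and moving of the root, and one coefficient for each of the orders 4, 5, 6
and two for the order 7 tell the normal forms apart.
-/

/-- The graph obtained from disjoint copies of `G` and `H` by adding an edge from `v` to `w`. -/
def edgeJoin {V W : Type*} (G : SimpleGraph V) (v : V) (H : SimpleGraph W) (w : W) :
    SimpleGraph (V ⊕ W) :=
  (G ⊕g H) ⊔ edge (.inl v) (.inr w)

section EdgeJoin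

variable {U V W V' W' : Type*} {G : SimpleGraph V} {H : SimpleGraph W}

@[simp]
lemma edgeJoin_adj_inl_inl {v : V} {w : W} {x y : V} :
    (edgeJoin G v H w).Adj (.inl x) (.inl y) ↔ G.Adj x y := by
  simp [edgeJoin, edge_adj]

@[simp]
lemma edgeJoin_adj_inr_inr {v : V} {w : W} {x y : W} :
    (edgeJoin G v H w).Adj (.inr x) (.inr y) ↔ H.Adj x y := by
  simp [edgeJoin, edge_adj]

@[simp]
lemma edgeJoin_adj_inl_inr {v : V} {w : W} {x : V} {y : W} :
    (edgeJoin G v H w).Adj (.inl x) (.inr y) ↔ x = v ∧ y = w := by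
  simp [edgeJoin, edge_adj]

@[simp]
lemma edgeJoin_adj_inr_inl {v : V} {w : W} {x : W} {y : V} :
    (edgeJoin G v H w).Adj (.inr x) (.inl y) ↔ x = w ∧ y = v := by
  simp [edgeJoin, edge_adj, and_comm]

/-- The inclusion of the first graph into an edge join. -/
def edgeJoinInl (G : SimpleGraph V) (v : V) (H : SimpleGraph W) (w : W) :
    G ↪g edgeJoin G v H w :=
  ⟨.inl, edgeJoin_adj_inl_inl⟩

/-- The inclusion of the second graph into an edge join. -/
def edgeJoinInr (G : SimpleGraph V) (v : V) (H : SimpleGraph W) (w : W) :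
    H ↪g edgeJoin G v H w :=
  ⟨.inr, edgeJoin_adj_inr_inr⟩

@[simp]
lemma edgeJoinInl_apply {v : V} {w : W} (x : V) : edgeJoinInl G v H w x = .inl x := rfl

@[simp]
lemma edgeJoinInr_apply {v : V} {w : W} (x : W) : edgeJoinInr G v H w x = .inr x := rfl

/-- Isomorphisms that match the joined vertices induce an isomorphism of edge joins. -/
def edgeJoinCongr {G' : SimpleGraph V'} {H' : SimpleGraph W'} (φ : G ≃g G') (ψ : H ≃g H')
    (v : V) (w : W) : edgeJoin G v H w ≃g edgeJoin G' (φ v) H' (ψ w) where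
  toEquiv := φ.toEquiv.sumCongr ψ.toEquiv
  map_rel_iff' := by rintro (x | x) (y | y) <;> simp [φ.map_adj_iff, ψ.map_adj_iff]

/-- Edge joins are symmetric in the two rooted graphs. -/
def edgeJoinComm (G : SimpleGraph V) (v : V) (H : SimpleGraph W) (w : W) :
    edgeJoin G v H w ≃g edgeJoin H w G v where
  toEquiv := Equiv.sumComm V W
  map_rel_iff' := by rintro (x | x) (y | y) <;> simp

/-- Two graphs joined to the same vertex can be interchanged. -/
def edgeJoinRightComm (G : SimpleGraph V) (v : V) (H : SimpleGraph W) (w : W)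
    (K : SimpleGraph U) (u : U) :
    edgeJoin (edgeJoin G v H w) (.inl v) K u ≃g edgeJoin (edgeJoin G v K u) (.inl v) H w where
  toEquiv := (Equiv.sumAssoc V W U).trans <|
    ((Equiv.refl V).sumCongr (Equiv.sumComm W U)).trans (Equiv.sumAssoc V U W).symm
  map_rel_iff' := by rintro ((x | x) | x) ((y | y) | y) <;> simp

lemma le_edgeJoin_iff {v : V} {w : W} {K : SimpleGraph (V ⊕ W)} :
    K ≤ edgeJoin G v H w ↔ ∃ G' ≤ G, ∃ H' ≤ H, K = G' ⊕g H' ∨ K = edgeJoin G' v H' w := by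
  constructor
  · intro hK
    refine ⟨K.comap .inl, fun x y h => by simpa using hK h,
      K.comap .inr, fun x y h => by simpa using hK h, ?_⟩
    have h_cross : ∀ x y, K.Adj (.inl x) (.inr y) → x = v ∧ y = w := fun x y h => by
      simpa using hK h
    by_cases hvw : K.Adj (.inl v) (.inr w)
    · right
      ext (x | x) (y | y) <;>
        grind [edgeJoin_adj_inl_inl, edgeJoin_adj_inl_inr, edgeJoin_adj_inr_inl,
          edgeJoin_adj_inr_inr, comap_adj, K.adj_comm]
    · left
      ext (x | x) (y | y) <;>
        grind [sum_adj, comap_adj, K.adj_comm]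
  · have sum_mono : ∀ G' ≤ G, ∀ H' ≤ H, (G' ⊕g H') ≤ G ⊕g H := by
      rintro G' hG H' hH (x | x) (y | y) h
      · exact hG h
      · cases h
      · cases h
      · exact hH h
    rintro ⟨G', hG, H', hH, rfl | rfl⟩
    · exact (sum_mono G' hG H' hH).trans le_sup_left
    · exact sup_le_sup_right (sum_mono G' hG H' hH) _

lemma exists_edgeJoin_iso_of_bridge {u v : V} (huv : G.Adj u v) {A : Set V} (hu : u ∈ A)
    (hv : v ∉ A) (hA : ∀ x ∈ A, ∀ y ∉ A, G.Adj x y → x = u ∧ y = v) :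
    ∃ φ : edgeJoin (G.induce A) ⟨u, hu⟩ (G.induce Aᶜ) ⟨v, hv⟩ ≃g G, φ (.inl ⟨u, hu⟩) = u := by
  classical
  refine ⟨⟨Equiv.Set.sumCompl A, ?_⟩, rfl⟩
  rintro (⟨x, hx⟩ | ⟨x, hx⟩) (⟨y, hy⟩ | ⟨y, hy⟩) <;>
    simp only [Equiv.Set.sumCompl_apply_inl, Equiv.Set.sumCompl_apply_inr, edgeJoin_adj_inl_inl,
      edgeJoin_adj_inr_inr, edgeJoin_adj_inl_inr, edgeJoin_adj_inr_inl, comap_adj,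
      Function.Embedding.subtype_apply, Subtype.mk.injEq] <;>
    grind [G.adj_comm]

end EdgeJoin

lemma reachable_sup_edge_iff {V : Type*} {G : SimpleGraph V} {u v x y : V} :
    (G ⊔ edge u v).Reachable x y ↔ G.Reachable x y ∨
      (G.Reachable x u ∧ G.Reachable v y) ∨ (G.Reachable x v ∧ G.Reachable u y) := by
  constructor
  · rintro ⟨p⟩
    induction p with
    | nil => exact .inl .rfl
    | @cons x z y h _ ih =>
      rcases h with h | h
      · have hxz : G.Reachable x z := h.reachable
        exact ih.imp hxz.trans (.imp (.imp_left hxz.trans) (.imp_left hxz.trans))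
      · rcases ((edge_adj ..).1 h).1 with ⟨rfl, rfl⟩ | ⟨rfl, rfl⟩ <;> grind [Reachable.rfl]
  · have huv : (G ⊔ edge u v).Reachable u v := by
      obtain rfl | h := eq_or_ne u v
      · rfl
      · exact Adj.reachable (.inr ((edge_adj ..).2 ⟨.inl ⟨rfl, rfl⟩, h⟩))
    have hle : G ≤ G ⊔ edge u v := le_sup_left
    rintro (h | ⟨h, h'⟩ | ⟨h, h'⟩)
    · exact h.mono hle
    · exact (h.mono hle).trans (huv.trans (h'.mono hle))
    · exact (h.mono hle).trans (huv.symm.trans (h'.mono hle))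

section Reachability

variable {V W : Type*} {G : SimpleGraph V} {H : SimpleGraph W} {v x : V} {w y : W}

lemma reachable_sum_iff {a b : V ⊕ W} :
    (G ⊕g H).Reachable a b ↔ Sum.LiftRel G.Reachable H.Reachable a b := by
  constructor
  · rintro ⟨p⟩
    induction p with
    | @nil a => cases a <;> simp
    | @cons a _ _ h _ ih =>
      rcases ih with hy | hy <;> rcases a with x | x
      · exact .inl ((sum_adj_inl.1 h).reachable.trans hy)
      · cases h
      · cases h
      · exact .inr ((sum_adj_inr.1 h).reachable.trans hy)
  · rintro (h | h)
    · exact h.map Embedding.sumInl.toHom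
    · exact h.map Embedding.sumInr.toHom

@[simp]
lemma reachable_edgeJoin_inl_inl {x y : V} :
    (edgeJoin G v H w).Reachable (.inl x) (.inl y) ↔ G.Reachable x y := by
  simp [edgeJoin, reachable_sup_edge_iff, reachable_sum_iff]

@[simp]
lemma reachable_edgeJoin_inr_inr {x y : W} :
    (edgeJoin G v H w).Reachable (.inr x) (.inr y) ↔ H.Reachable x y := by
  simp [edgeJoin, reachable_sup_edge_iff, reachable_sum_iff]

@[simp]
lemma reachable_edgeJoin_inl_inr :
    (edgeJoin G v H w).Reachable (.inl x) (.inr y) ↔ G.Reachable x v ∧ H.Reachable w y := by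
  simp [edgeJoin, reachable_sup_edge_iff, reachable_sum_iff]

@[simp]
lemma reachable_edgeJoin_inr_inl :
    (edgeJoin G v H w).Reachable (.inr y) (.inl x) ↔ G.Reachable x v ∧ H.Reachable w y := by
  rw [reachable_comm, reachable_edgeJoin_inl_inr]

end Reachability

/-- The order of the connected component of `v`, and the orders of all other components. -/
noncomputable def rootedSizes {V : Type*} (H : SimpleGraph V) (v : V) : ℕ × Multiset ℕ :=
  ((H.connectedComponentMk v).supp.ncard,
    ∑ᶠ c ∈ ({H.connectedComponentMk v}ᶜ : Set H.ConnectedComponent), {c.supp.ncard})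

lemma compSizes_eq_finsum {V : Type} [Fintype V] (H : SimpleGraph V) :
    compSizes H = ∑ᶠ c : H.ConnectedComponent, {c.supp.ncard} := by
  classical
  have h_univ : Finset.univ.image H.connectedComponentMk = Finset.univ :=
    Finset.image_univ_of_surjective Quot.mk_surjective
  rw [finsum_eq_sum_of_fintype, ← h_univ, Finset.sum, ← Multiset.sum_map_singleton (compSizes H),
    compSizes, Multiset.map_map]
  congr!

lemma finsum_supp_ncard_eq_cons {V : Type*} [Finite V] (H : SimpleGraph V) (v : V) :
    ∑ᶠ c : H.ConnectedComponent, {c.supp.ncard} = (rootedSizes H v).1 ::ₘ (rootedSizes H v).2 := by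
  rw [← Multiset.singleton_add]
  exact (finsum_mem_univ _).symm.trans <|
    (Set.insert_eq _ _ ▸ Set.union_compl_self {H.connectedComponentMk v}) ▸
      finsum_mem_insert _ (by simp) (Set.toFinite _)

lemma compSizes_eq_cons {V : Type} [Fintype V] (H : SimpleGraph V) (v : V) :
    compSizes H = (rootedSizes H v).1 ::ₘ (rootedSizes H v).2 :=
  (compSizes_eq_finsum H).trans (finsum_supp_ncard_eq_cons H v)

section Recursion

variable {U V W : Type*} {G : SimpleGraph V} {H : SimpleGraph W} {K : SimpleGraph U}

lemma finsum_mem_map_image_supp_ncard (f : G ↪g K) {S : Set G.ConnectedComponent}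
    (hf : ∀ x, G.connectedComponentMk x ∈ S →
      ∀ y, K.Reachable (f x) y ↔ ∃ z, G.Reachable x z ∧ f z = y) :
    ∑ᶠ c ∈ ConnectedComponent.map f.toHom '' S, ({c.supp.ncard} : Multiset ℕ) =
      ∑ᶠ c ∈ S, {c.supp.ncard} := by
  rw [finsum_mem_image]
  · refine finsum_mem_congr rfl fun c hc => ?_
    induction c using ConnectedComponent.ind with | _ x
    rw [← f.injective.injOn.ncard_image]
    congr 2
    ext y
    rw [ConnectedComponent.map_mk, ConnectedComponent.mem_supp_iff, ConnectedComponent.eq,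
      reachable_comm]
    simpa [reachable_comm] using hf x hc y
  · intro c hc d _ hcd
    induction c, d using ConnectedComponent.ind₂ with | _ x y
    obtain ⟨z, hxz, hzy⟩ := (hf x hc _).1 (ConnectedComponent.eq.1 hcd)
    exact ConnectedComponent.eq.2 (f.injective hzy ▸ hxz)

lemma mk_mem_map_image_iff (f : G →g K) {S : Set G.ConnectedComponent} {y : U} :
    K.connectedComponentMk y ∈ ConnectedComponent.map f '' S ↔
      ∃ x, G.connectedComponentMk x ∈ S ∧ K.Reachable (f x) y := by
  simp [ConnectedComponent.exists]

lemma finsum_mem_map_image_union [Finite V] [Finite W] (f : G ↪g K) (g : H ↪g K)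
    {S : Set G.ConnectedComponent} {T : Set H.ConnectedComponent}
    (hf : ∀ x, G.connectedComponentMk x ∈ S →
      ∀ y, K.Reachable (f x) y ↔ ∃ z, G.Reachable x z ∧ f z = y)
    (hg : ∀ x, H.connectedComponentMk x ∈ T →
      ∀ y, K.Reachable (g x) y ↔ ∃ z, H.Reachable x z ∧ g z = y)
    (hfg : ∀ x y, f x ≠ g y) :
    ∑ᶠ c ∈ ConnectedComponent.map f.toHom '' S ∪ ConnectedComponent.map g.toHom '' T,
        ({c.supp.ncard} : Multiset ℕ) =
      (∑ᶠ c ∈ S, {c.supp.ncard}) + ∑ᶠ c ∈ T, {c.supp.ncard} := by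
  rw [finsum_mem_union _ (Set.toFinite _) (Set.toFinite _),
    finsum_mem_map_image_supp_ncard f hf, finsum_mem_map_image_supp_ncard g hg]
  refine Set.disjoint_left.2 ?_
  rintro _ ⟨c, hc, rfl⟩ hcT
  induction c using ConnectedComponent.ind with | _ x
  obtain ⟨y, hy, hyx⟩ := (mk_mem_map_image_iff _).1 hcT
  obtain ⟨z, -, hz⟩ := (hg y hy _).1 hyx
  exact hfg x z hz.symm

variable [Finite V] [Finite W] (G H) (v : V) (w : W)

lemma rootedSizes_sum : rootedSizes (G ⊕g H) (.inl v) =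
    ((rootedSizes G v).1,
      (rootedSizes H w).1 ::ₘ ((rootedSizes G v).2 + (rootedSizes H w).2)) := by
  have h_supp : ((G ⊕g H).connectedComponentMk (.inl v)).supp =
      .inl '' (G.connectedComponentMk v).supp := by
    ext (x | x) <;> simp [reachable_sum_iff]
  have h_compl : ({(G ⊕g H).connectedComponentMk (.inl v)}ᶜ : Set (G ⊕g H).ConnectedComponent) =
      ConnectedComponent.map Embedding.sumInl.toHom '' {G.connectedComponentMk v}ᶜ ∪
        ConnectedComponent.map Embedding.sumInr.toHom '' Set.univ := by
    ext c
    induction c using ConnectedComponent.ind with | _ x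
    rw [Set.mem_union, mk_mem_map_image_iff, mk_mem_map_image_iff]
    rcases x with x | x
    · have : ¬G.Reachable x v ↔ ∃ y, ¬G.Reachable y v ∧ G.Reachable y x := by
        grind [Reachable.trans, Reachable.symm, Reachable.refl]
      simpa [reachable_sum_iff] using this
    · simpa [reachable_sum_iff] using ⟨x, .refl x⟩
  ext1
  · simp only [rootedSizes, h_supp, Set.InjOn.ncard_image Sum.inl_injective.injOn]
  · simp only [rootedSizes]
    rw [h_compl, finsum_mem_map_image_union _ _ (by simp [reachable_sum_iff])
      (by simp [reachable_sum_iff]) (by simp),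
      finsum_mem_univ, finsum_supp_ncard_eq_cons H w, Multiset.add_cons]
    rfl

lemma rootedSizes_edgeJoin : rootedSizes (edgeJoin G v H w) (.inl v) =
    ((rootedSizes G v).1 + (rootedSizes H w).1, (rootedSizes G v).2 + (rootedSizes H w).2) := by
  have h_supp : ((edgeJoin G v H w).connectedComponentMk (.inl v)).supp =
      .inl '' (G.connectedComponentMk v).supp ∪ .inr '' (H.connectedComponentMk w).supp := by
    ext (x | x) <;> simp [reachable_comm]
  have h_compl : ({(edgeJoin G v H w).connectedComponentMk (.inl v)}ᶜ :
        Set (edgeJoin G v H w).ConnectedComponent) =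
      ConnectedComponent.map (edgeJoinInl G v H w).toHom '' {G.connectedComponentMk v}ᶜ ∪
        ConnectedComponent.map (edgeJoinInr G v H w).toHom '' {H.connectedComponentMk w}ᶜ := by
    ext c
    induction c using ConnectedComponent.ind with | _ x
    rw [Set.mem_union, mk_mem_map_image_iff, mk_mem_map_image_iff]
    rcases x with x | x <;>
      simp only [Set.mem_compl_iff, Set.mem_singleton_iff, ConnectedComponent.eq,
        Embedding.coe_toHom, edgeJoinInl_apply, edgeJoinInr_apply, reachable_edgeJoin_inl_inl,
        reachable_edgeJoin_inl_inr, reachable_edgeJoin_inr_inl, reachable_edgeJoin_inr_inr] <;>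
      grind [Reachable.trans, Reachable.symm, Reachable.refl]
  have h_inl : ∀ x, G.connectedComponentMk x ∈ ({G.connectedComponentMk v}ᶜ : Set _) →
      ∀ y, (edgeJoin G v H w).Reachable (edgeJoinInl G v H w x) y ↔
        ∃ z, G.Reachable x z ∧ edgeJoinInl G v H w z = y := by
    rintro x hx (y | y) <;> simp_all
  have h_inr : ∀ x, H.connectedComponentMk x ∈ ({H.connectedComponentMk w}ᶜ : Set _) →
      ∀ y, (edgeJoin G v H w).Reachable (edgeJoinInr G v H w x) y ↔
        ∃ z, H.Reachable x z ∧ edgeJoinInr G v H w z = y := by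
    rintro x hx (y | y) <;> simp_all [reachable_comm]
  ext1
  · simp only [rootedSizes]
    rw [h_supp, Set.ncard_union_eq (by simp [Set.disjoint_left]),
      Set.InjOn.ncard_image Sum.inl_injective.injOn, Set.InjOn.ncard_image Sum.inr_injective.injOn]
  · simp only [rootedSizes]
    rw [h_compl, finsum_mem_map_image_union _ _ h_inl h_inr (by simp)]

end Recursion

section SpanningProfile

/-- The rooted component sizes of all spanning subgraphs of `G`, with multiplicity. -/
noncomputable def spanningProfile {V : Type*} [Finite V] (G : SimpleGraph V) (v : V) :
    Multiset (ℕ × Multiset ℕ) :=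
  (Set.toFinite (Set.Iic G)).toFinset.val.map fun H => rootedSizes H v

lemma spanningProfile_of_subsingleton {V : Type*} [Subsingleton V] (G : SimpleGraph V) (v : V) :
    spanningProfile G v = {(1, 0)} := by
  have h_compl (H : SimpleGraph V) : ({H.connectedComponentMk v}ᶜ : Set _) = ∅ := by
    simp [Set.eq_empty_iff_forall_notMem, ConnectedComponent.forall, Subsingleton.elim _ v]
  have h_sizes (H : SimpleGraph V) : rootedSizes H v = (1, 0) := by
    simp only [rootedSizes, h_compl, finsum_mem_empty]
    have : Nonempty V := ⟨v⟩
    simp [ConnectedComponent.supp, Subsingleton.elim _ v, Nat.card_unique]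
  have h_subgraphs : (Set.toFinite (Set.Iic G)).toFinset = {⊥} := by
    ext
    simp [Subsingleton.elim _ G]
  simp [spanningProfile, h_subgraphs, h_sizes]

lemma graphSum_injective {V W : Type*} : Function.Injective
    fun p : SimpleGraph V × SimpleGraph W => p.1 ⊕g p.2 := by
  rintro ⟨G, H⟩ ⟨G', H'⟩ h
  ext x y
  · simpa using congr(($h).Adj (.inl x) (.inl y))
  · simpa using congr(($h).Adj (.inr x) (.inr y))

lemma edgeJoin_injective {V W : Type*} (v : V) (w : W) : Function.Injective
    fun p : SimpleGraph V × SimpleGraph W => edgeJoin p.1 v p.2 w := by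
  rintro ⟨G, H⟩ ⟨G', H'⟩ h
  ext x y
  · simpa using congr(($h).Adj (.inl x) (.inl y))
  · simpa using congr(($h).Adj (.inr x) (.inr y))

lemma graphSum_ne_edgeJoin {V W : Type*} (G G' : SimpleGraph V) (H H' : SimpleGraph W) (v : V)
    (w : W) : (G ⊕g H) ≠ edgeJoin G' v H' w := fun h => by
  simpa using congr(($h).Adj (.inl v) (.inr w))

lemma map_product_map {α β γ δ : Type*} (f : α → γ) (g : β → δ) (s : Multiset α) (t : Multiset β) :
    s.map f ×ˢ t.map g = (s ×ˢ t).map (Prod.map f g) := by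
  simp [SProd.sprod, Multiset.product, Multiset.map_bind, Multiset.bind_map]

lemma spanningProfile_edgeJoin {V W : Type*} [Finite V] [Finite W] (G : SimpleGraph V) (v : V)
    (H : SimpleGraph W) (w : W) : spanningProfile (edgeJoin G v H w) (.inl v) =
      (spanningProfile G v ×ˢ spanningProfile H w).map
          (fun p => (p.1.1, p.2.1 ::ₘ (p.1.2 + p.2.2))) +
        (spanningProfile G v ×ˢ spanningProfile H w).map
          (fun p => (p.1.1 + p.2.1, p.1.2 + p.2.2)) := by
  let S := (Set.toFinite (Set.Iic G)).toFinset
  let T := (Set.toFinite (Set.Iic H)).toFinset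
  let sums := (S ×ˢ T).map ⟨_, graphSum_injective⟩
  let joins := (S ×ˢ T).map ⟨_, edgeJoin_injective v w⟩
  have h_disj : Disjoint sums joins := by
    simp only [sums, joins, Finset.disjoint_left, Finset.mem_map, not_exists, not_and]
    rintro _ ⟨p, -, rfl⟩ q - h
    exact graphSum_ne_edgeJoin _ _ _ _ v w h.symm
  have h_subgraphs : (Set.toFinite (Set.Iic (edgeJoin G v H w))).toFinset =
      sums.disjUnion joins h_disj := by
    ext K
    simp only [Set.Finite.mem_toFinset, Set.mem_Iic, le_edgeJoin_iff, sums, joins, S, T,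
      Finset.mem_disjUnion, Finset.mem_map, Finset.mem_product, Function.Embedding.coeFn_mk,
      Prod.exists]
    grind
  rw [spanningProfile, h_subgraphs, Finset.disjUnion_val, Multiset.map_add, spanningProfile,
    spanningProfile, map_product_map]
  simp only [sums, joins, Finset.map_val, Finset.product_val, Multiset.map_map, Function.comp_def,
    Function.Embedding.coeFn_mk, Prod.map_fst, Prod.map_snd, rootedSizes_sum _ _ v w,
    rootedSizes_edgeJoin]
  rfl

lemma cCoeff_eq_ncard_subgraphs {V : Type} [Fintype V] (G : SimpleGraph V) (lam : Multiset ℕ) :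
    cCoeff G lam = {H ∈ Set.Iic G | compSizes H = lam}.ncard := by
  have h_image : {F | F ⊆ G.edgeSet ∧ compSizes (fromEdgeSet F) = lam} =
      edgeSet '' {H ∈ Set.Iic G | compSizes H = lam} := by
    ext F
    constructor
    · rintro ⟨hF, rfl⟩
      have h_edges : (fromEdgeSet F).edgeSet = F := by
        rw [edgeSet_fromEdgeSet, sdiff_eq_left, Set.disjoint_left]
        exact fun e he => G.not_isDiag_of_mem_edgeSet (hF he)
      exact ⟨fromEdgeSet F, ⟨edgeSet_subset_edgeSet.1 (h_edges.trans_subset hF), rfl⟩, h_edges⟩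
    · rintro ⟨H, ⟨hH, rfl⟩, rfl⟩
      exact ⟨edgeSet_mono hH, by rw [fromEdgeSet_edgeSet]⟩
  rw [cCoeff, h_image, Set.InjOn.ncard_image edgeSet_injective.injOn]

lemma cCoeff_eq_count {V : Type} [Fintype V] (G : SimpleGraph V) (v : V) (lam : Multiset ℕ) :
    cCoeff G lam = ((spanningProfile G v).map fun p => p.1 ::ₘ p.2).count lam := by
  classical
  rw [cCoeff_eq_ncard_subgraphs, spanningProfile, Multiset.map_map, Multiset.count_map,
    Set.ncard_eq_toFinset_card _ (Set.toFinite _), Finset.card]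
  simp only [Function.comp_def, ← compSizes_eq_cons]
  rw [← Finset.filter_val]
  congr 2
  ext H
  simp [eq_comm]

lemma compSizes_comap {V W : Type} [Fintype V] [Fintype W] (H : SimpleGraph W) (φ : V ≃ W) :
    compSizes (H.comap φ) = compSizes H := by
  let ψ := Iso.comap φ H
  rw [compSizes_eq_finsum, compSizes_eq_finsum]
  refine finsum_eq_of_bijective ψ.connectedComponentEquiv ψ.connectedComponentEquiv.bijective ?_
  intro c
  exact congrArg _ (Nat.card_congr (ConnectedComponent.isoEquivSupp ψ c))

lemma cCoeff_congr {V W : Type} [Fintype V] [Fintype W] {G : SimpleGraph V} {H : SimpleGraph W}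
    (φ : G ≃g H) (lam : Multiset ℕ) : cCoeff G lam = cCoeff H lam := by
  rw [cCoeff_eq_ncard_subgraphs, cCoeff_eq_ncard_subgraphs]
  refine Nat.card_congr (φ.symm.toEquiv.simpleGraph.symm.subtypeEquiv fun K => ?_)
  change K ≤ G ∧ _ ↔ K.comap φ.symm.toEquiv ≤ H ∧ compSizes (K.comap φ.symm.toEquiv) = lam
  have h_le : K.comap φ.symm.toEquiv ≤ H ↔ K ≤ G := by
    constructor
    · intro h x y hxy
      simpa [φ.map_adj_iff] using @h (φ x) (φ y) (by simpa using hxy)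
    · exact fun h x y hxy => φ.symm.map_adj_iff.1 (h hxy)
  rw [compSizes_comap, h_le]

end SpanningProfile

section TreeSplitting

variable {V : Type*} {T : SimpleGraph V} {u v : V}

lemma deleteEdges_sup_edge (huv : T.Adj u v) : T.deleteEdges {s(u, v)} ⊔ edge u v = T :=
  sdiff_sup_cancel <| (edge_le_iff ..).2 (.inr huv)

lemma isTree_induce_supp_deleteEdges (hT : T.IsAcyclic) (s : Set (Sym2 V)) (x : V) :
    (T.induce ((T.deleteEdges s).connectedComponentMk x).supp).IsTree :=
  ⟨(ConnectedComponent.connected_toSimpleGraph _).mono (comap_monotone _ (deleteEdges_le s)),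
    hT.induce _⟩

lemma supp_deleteEdges_compl (hT : T.IsTree) (huv : T.Adj u v) :
    ((T.deleteEdges {s(u, v)}).connectedComponentMk u).suppᶜ =
      ((T.deleteEdges {s(u, v)}).connectedComponentMk v).supp := by
  have h_bridge : ¬(T.deleteEdges {s(u, v)}).Reachable u v :=
    isBridge_iff.1 (isAcyclic_iff_forall_adj_isBridge.1 hT.isAcyclic huv)
  ext x
  have h_reach : T.Reachable u x := hT.connected u x
  rw [← deleteEdges_sup_edge huv, reachable_sup_edge_iff] at h_reach
  simp only [Set.mem_compl_iff, ConnectedComponent.mem_supp_iff, ConnectedComponent.eq]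
  grind [Reachable.trans, Reachable.symm]

lemma exists_edgeJoin_iso_of_isTree (hT : T.IsTree) (huv : T.Adj u v) :
    ∃ (A : Set V) (hu : u ∈ A) (hv : v ∈ Aᶜ), (T.induce A).IsTree ∧ (T.induce Aᶜ).IsTree ∧
      ∃ φ : edgeJoin (T.induce A) ⟨u, hu⟩ (T.induce Aᶜ) ⟨v, hv⟩ ≃g T, φ (.inl ⟨u, hu⟩) = u := by
  have h_compl := supp_deleteEdges_compl hT huv
  have hv : v ∈ ((T.deleteEdges {s(u, v)}).connectedComponentMk u).suppᶜ := h_compl ▸ rfl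
  have hu : u ∈ ((T.deleteEdges {s(u, v)}).connectedComponentMk u).supp := rfl
  refine ⟨_, hu, hv, isTree_induce_supp_deleteEdges hT.isAcyclic _ u,
    h_compl ▸ isTree_induce_supp_deleteEdges hT.isAcyclic _ v,
    exists_edgeJoin_iso_of_bridge huv hu hv fun x hx y hy hxy => ?_⟩
  have h_not_adj : ¬(T.deleteEdges {s(u, v)}).Adj x y := fun h =>
    hy ((ConnectedComponent.mem_supp_congr_adj _ h).1 hx)
  have h_edge : s(x, y) = s(u, v) := by
    by_contra h
    exact h_not_adj (deleteEdges_adj.2 ⟨hxy, h⟩)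
  rcases Sym2.eq_iff.1 h_edge with h | ⟨rfl, -⟩
  · exact h
  · exact absurd hx hv

end TreeSplitting

/-- Rooted plane trees, used as a computable encoding of finite trees: `graft s t` is `s` with the
tree `t` attached by an edge from the root of `s` to the root of `t`. -/
inductive PlantedTree
  | single
  | graft (s t : PlantedTree)
  deriving DecidableEq

namespace PlantedTree

/-- The vertex type of the graph of a planted tree. -/
def Vert : PlantedTree → Type
  | single => Unit
  | graft s t => s.Vert ⊕ t.Vert

/-- The root vertex. -/
def root : (t : PlantedTree) → t.Vert
  | single => ()
  | graft s _ => .inl s.root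

/-- The underlying graph of a planted tree. -/
def graph : (t : PlantedTree) → SimpleGraph t.Vert
  | single => (⊥ : SimpleGraph Unit)
  | graft s t => edgeJoin s.graph s.root t.graph t.root

instance instFintypeVert : (t : PlantedTree) → Fintype t.Vert
  | single => inferInstanceAs (Fintype Unit)
  | graft s t => @instFintypeSum _ _ s.instFintypeVert t.instFintypeVert

/-- The number of vertices of a planted tree. -/
def order : PlantedTree → ℕ
  | single => 1
  | graft s t => s.order + t.order

/-- The multiset `spanningProfile t.graph t.root`, computed by recursion on `t`. -/
def profile : PlantedTree → Multiset (ℕ × Multiset ℕ)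
  | single => {(1, 0)}
  | graft s t =>
    (s.profile ×ˢ t.profile).map (fun p => (p.1.1, p.2.1 ::ₘ (p.1.2 + p.2.2))) +
      (s.profile ×ˢ t.profile).map (fun p => (p.1.1 + p.2.1, p.1.2 + p.2.2))

/-- The coefficient `cCoeff t.graph lam`, in computable form. -/
def coeff (t : PlantedTree) (lam : Multiset ℕ) : ℕ :=
  (t.profile.map fun p => p.1 ::ₘ p.2).count lam

lemma card_vert : (t : PlantedTree) → Fintype.card t.Vert = t.order
  | single => rfl
  | graft s t => by
    rw [order, ← s.card_vert, ← t.card_vert]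
    exact Fintype.card_sum

lemma order_pos : (t : PlantedTree) → 0 < t.order
  | single => one_pos
  | graft s _ => Nat.add_pos_left s.order_pos _

lemma spanningProfile_graph : (t : PlantedTree) → spanningProfile t.graph t.root = t.profile
  | single => spanningProfile_of_subsingleton (⊥ : SimpleGraph Unit) ()
  | graft s t => by
    rw [profile, ← s.spanningProfile_graph, ← t.spanningProfile_graph]
    exact spanningProfile_edgeJoin s.graph s.root t.graph t.root

lemma cCoeff_graph (t : PlantedTree) (lam : Multiset ℕ) : cCoeff t.graph lam = t.coeff lam := by
  rw [cCoeff_eq_count t.graph t.root, spanningProfile_graph, coeff]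

/-- `t` encodes the graph `G` rooted at `v`. -/
def Encodes {V : Type*} (t : PlantedTree) (G : SimpleGraph V) (v : V) : Prop :=
  ∃ φ : t.graph ≃g G, φ t.root = v

section Encodes

variable {V W : Type*} {G : SimpleGraph V} {H : SimpleGraph W} {v : V} {w : W} {s t : PlantedTree}

lemma Encodes.map (ht : t.Encodes G v) (φ : G ≃g H) : t.Encodes H (φ v) := by
  obtain ⟨ψ, rfl⟩ := ht
  exact ⟨ψ.trans φ, rfl⟩

lemma Encodes.trans (hs : s.Encodes t.graph t.root) (ht : t.Encodes G v) : s.Encodes G v := by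
  obtain ⟨ψ, rfl⟩ := ht
  exact hs.map ψ

lemma Encodes.graft (hs : s.Encodes G v) (ht : t.Encodes H w) :
    (graft s t).Encodes (edgeJoin G v H w) (.inl v) := by
  obtain ⟨φ, rfl⟩ := hs
  obtain ⟨ψ, rfl⟩ := ht
  exact ⟨edgeJoinCongr φ ψ _ _, rfl⟩

lemma encodes_single [Subsingleton V] (v : V) : single.Encodes G v :=
  ⟨⟨⟨fun _ => v, fun _ => (), fun _ => rfl, fun _ => Subsingleton.elim _ _⟩,
    fun {_ _} => iff_of_false (fun h => h.ne rfl) id⟩, rfl⟩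

end Encodes

lemma exists_encodes {V : Type*} [Finite V] {T : SimpleGraph V} (hT : T.IsTree) (r : V) :
    ∃ t : PlantedTree, t.Encodes T r := by
  induction h : Nat.card V using Nat.strong_induction_on generalizing V with | _ n ih
  subst h
  rcases subsingleton_or_nontrivial V with _ | _
  · exact ⟨single, encodes_single r⟩
  · obtain ⟨u, hru⟩ := hT.connected.preconnected.exists_adj_of_nontrivial r
    obtain ⟨A, hr, hu, hA, hA', φ, hφ⟩ := exists_edgeJoin_iso_of_isTree hT hru
    have h_card : Nat.card A < Nat.card V := Finite.card_subtype_lt hu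
    have h_card_compl : Nat.card ↑Aᶜ < Nat.card V := Finite.card_subtype_lt (not_not_intro hr)
    obtain ⟨s, hs⟩ := ih _ h_card hA ⟨r, hr⟩ rfl
    obtain ⟨t, ht⟩ := ih _ h_card_compl hA' ⟨u, hu⟩ rfl
    exact ⟨graft s t, hφ ▸ (hs.graft ht).map φ⟩

/-- A code for comparing planted trees lexicographically. It starts with the order, so a tree with
more vertices has a larger key, and ties are broken by the shape. -/
def key : PlantedTree → List ℕ
  | single => [1]
  | graft s t => (s.order + t.order) :: (t.key ++ s.key)

/-- Attaches the branch `c` to the root, at its place in the order of keys. -/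
def addBranch (c : PlantedTree) : PlantedTree → PlantedTree
  | single => graft single c
  | graft s t => if c.key < t.key then graft (addBranch c s) t else graft (graft s t) c

/-- Sorts the branches at every vertex by their keys, the largest one outermost. -/
def sort : PlantedTree → PlantedTree
  | single => single
  | graft s t => addBranch t.sort s.sort

/-- Moves the root along its outermost edge if the branch there has a larger key than the rest;
iterated on a sorted tree, this moves the root towards the centroid. -/
def recenter : PlantedTree → PlantedTree
  | single => single
  | graft s t => if s.key < t.key then (graft t s).sort else graft s t

/-- A normal form for `t` as an unrooted tree. Only the isomorphism with `t` is proved in general;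
that isomorphic trees of order at most seven have equal normal forms is a consequence of
`eq_of_coeff_eq`. -/
def canonical (t : PlantedTree) : PlantedTree :=
  recenter^[t.order] t.sort

lemma encodes_self (t : PlantedTree) : t.Encodes t.graph t.root :=
  ⟨.refl, rfl⟩

lemma encodes_addBranch (c : PlantedTree) :
    (t : PlantedTree) → (addBranch c t).Encodes (graft t c).graph (graft t c).root
  | single => encodes_self _
  | graft s t => by
    rw [addBranch]
    split_ifs
    · exact ((encodes_addBranch c s).graft t.encodes_self).map
        (edgeJoinRightComm s.graph s.root c.graph c.root t.graph t.root)
    · exact encodes_self _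

lemma encodes_sort : (t : PlantedTree) → t.sort.Encodes t.graph t.root
  | single => encodes_self _
  | graft s t =>
    (encodes_addBranch t.sort s.sort).trans (s.encodes_sort.graft t.encodes_sort)

lemma nonempty_iso_recenter : (t : PlantedTree) → Nonempty (t.recenter.graph ≃g t.graph)
  | single => ⟨.refl⟩
  | graft s t => by
    by_cases h : s.key < t.key
    · rw [recenter, if_pos h]
      obtain ⟨φ, -⟩ := (graft t s).encodes_sort
      exact ⟨φ.trans (edgeJoinComm t.graph t.root s.graph s.root)⟩
    · rw [recenter, if_neg h]
      exact ⟨.refl⟩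

lemma nonempty_iso_canonical (t : PlantedTree) : Nonempty (t.canonical.graph ≃g t.graph) := by
  have h_iterate (n : ℕ) : Nonempty ((recenter^[n] t.sort).graph ≃g t.graph) := by
    induction n with
    | zero => exact Exists.nonempty t.encodes_sort
    | succ n ih =>
      rw [Function.iterate_succ_apply']
      exact (nonempty_iso_recenter _).map2 RelIso.trans ih
  exact h_iterate t.order

/-- A list containing all planted trees of order at most `n`. -/
def ofOrderLE : ℕ → List PlantedTree
  | 0 => []
  | n + 1 => single ::
      ((ofOrderLE n ×ˢ ofOrderLE n).map fun p => graft p.1 p.2).filter fun t => t.order ≤ n + 1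

lemma mem_ofOrderLE : {n : ℕ} → (t : PlantedTree) → t.order ≤ n → t ∈ ofOrderLE n
  | 0, t, h => absurd t.order_pos h.not_gt
  | n + 1, single, _ => List.mem_cons_self
  | n + 1, graft s t, h => by
    have hs : s.order ≤ n := by have := t.order_pos; rw [order] at h; omega
    have ht : t.order ≤ n := by have := s.order_pos; rw [order] at h; omega
    refine List.mem_cons_of_mem _ (List.mem_filter.2 ⟨List.mem_map.2 ⟨(s, t), ?_, rfl⟩, by simpa⟩)
    exact List.mem_product.2 ⟨mem_ofOrderLE s hs, mem_ofOrderLE t ht⟩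

/-- The normal forms of the trees of order at most seven. -/
def canonicalTrees : List PlantedTree :=
  ((ofOrderLE 7).map canonical).dedup

/-- Partitions of `d` whose coefficients distinguish the trees of order `d`, for `d ≤ 7`. -/
def separatingPartitions : ℕ → List (Multiset ℕ)
  | 4 => [{2, 2}]
  | 5 => [{4, 1}]
  | 6 => [{4, 1, 1}]
  | 7 => [{4, 3}, {3, 2, 1, 1}]
  | _ => []

lemma pos_and_sum_eq_of_mem_separatingPartitions {d : ℕ} {lam : Multiset ℕ}
    (h : lam ∈ separatingPartitions d) : (∀ i ∈ lam, 0 < i) ∧ lam.sum = d := by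
  unfold separatingPartitions at h
  split at h <;> fin_cases h <;> decide

lemma eq_of_coeff_eq : ∀ s ∈ canonicalTrees, ∀ t ∈ canonicalTrees, s.order = t.order →
    (∀ lam ∈ separatingPartitions s.order, s.coeff lam = t.coeff lam) → s = t := by
  decide +kernel

end PlantedTree

lemma exists_mem_canonicalTrees_iso {V : Type*} [Fintype V] {T : SimpleGraph V} (hT : T.IsTree)
    (h7 : Fintype.card V ≤ 7) : ∃ t ∈ PlantedTree.canonicalTrees, Nonempty (t.graph ≃g T) := by
  obtain ⟨r⟩ := hT.connected.nonempty
  obtain ⟨t, φ, -⟩ := PlantedTree.exists_encodes hT r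
  have h_order : t.order ≤ 7 := by rwa [← t.card_vert, Fintype.card_congr φ.toEquiv]
  obtain ⟨ψ⟩ := t.nonempty_iso_canonical
  exact ⟨t.canonical, List.mem_dedup.2 (List.mem_map_of_mem (PlantedTree.mem_ofOrderLE t h_order)),
    ⟨ψ.trans φ⟩⟩

theorem trees_le_seven_distinguished_general {V₁ V₂ : Type} [Fintype V₁] [Fintype V₂]
    (T₁ : SimpleGraph V₁) (T₂ : SimpleGraph V₂) (d : ℕ)
    (hd₁ : Fintype.card V₁ = d) (hd₂ : Fintype.card V₂ = d) (hd7 : d ≤ 7)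
    (h₁ : T₁.IsTree) (h₂ : T₂.IsTree)
    (hc : ∀ lam ∈ PlantedTree.separatingPartitions d, cCoeff T₁ lam = cCoeff T₂ lam) :
    Nonempty (T₁ ≃g T₂) := by
  obtain ⟨s, hs, ⟨φ⟩⟩ := exists_mem_canonicalTrees_iso h₁ (hd₁.trans_le hd7)
  obtain ⟨t, ht, ⟨ψ⟩⟩ := exists_mem_canonicalTrees_iso h₂ (hd₂.trans_le hd7)
  have hsd : s.order = d := by rw [← s.card_vert, Fintype.card_congr φ.toEquiv, hd₁]
  have htd : t.order = d := by rw [← t.card_vert, Fintype.card_congr ψ.toEquiv, hd₂]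
  have h_coeff : ∀ lam ∈ PlantedTree.separatingPartitions s.order, s.coeff lam = t.coeff lam := by
    intro lam hlam
    rw [← s.cCoeff_graph, ← t.cCoeff_graph, cCoeff_congr φ, cCoeff_congr ψ, hc lam (hsd ▸ hlam)]
  obtain rfl := PlantedTree.eq_of_coeff_eq s hs t ht (hsd.trans htd.symm) h_coeff
  exact ⟨φ.symm.trans ψ⟩

/-- Two trees of the same order `d ≤ 7` with the same coefficients `c_λ` for every
partition `λ` of `d` (equivalently, with equal chromatic symmetric functions) are
isomorphic as graphs. -/
theorem trees_le_seven_distinguished {V₁ V₂ : Type} [Fintype V₁] [Fintype V₂]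
    (T₁ : SimpleGraph V₁) (T₂ : SimpleGraph V₂) (d : ℕ)
    (hd₁ : Fintype.card V₁ = d) (hd₂ : Fintype.card V₂ = d) (hd7 : d ≤ 7)
    (h₁ : T₁.IsTree) (h₂ : T₂.IsTree)
    (hc : ∀ lam : Multiset ℕ, (∀ i ∈ lam, 0 < i) → lam.sum = d →
      cCoeff T₁ lam = cCoeff T₂ lam) :
    Nonempty (T₁ ≃g T₂) :=
  trees_le_seven_distinguished_general T₁ T₂ d hd₁ hd₂ hd7 h₁ h₂ fun lam hlam =>
    (PlantedTree.pos_and_sum_eq_of_mem_separatingPartitions hlam).elim (hc lam)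
end
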